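/- arXiv:1705.06884 — 5 statements merged into one kernel-verified Lean document; each statement's English description precedes it below -/
import Mathlib

section
/- The loss function ℓ2 is differentiable on ℝ^d × ℝ^{d×k}, and its partial gradient with respect to W is given by ∇_W ℓ2(y,W) = (W h*(y,W) + r*(y,W) − y) h*(y,W)^T, where (h*(y,W), r*(y,W)) is the unique minimizer of ℓ̃2(y,W,·,·) over H × R. -/
open scoped RealInnerProductSpace ENNReal

noncomputable section

/-- `ℝ^d` with the Euclidean norm. -/
abbrev Vec (d : ℕ) := EuclideanSpace ℝ (Fin d)

/-- `ℝ^{d×k}` with the Frobenius (Euclidean) norm, viewed as a Euclidean space. -/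
abbrev Mat (d k : ℕ) := EuclideanSpace ℝ (Fin d × Fin k)

/-- Matrix-vector product `W h`. -/
def matMulVec {d k : ℕ} (W : Mat d k) (h : Vec k) : Vec d :=
  (WithLp.equiv 2 (Fin d → ℝ)).symm (fun i => ∑ j, W (i, j) * h j)

/-- The function `ℓ̃₂(y, W, h, r) = (1/2)‖y − Wh − r‖² + φ(h) + ϕ(r)`, with values in `[0,∞]`. -/
def ell2t {d k : ℕ} (φ : Vec k → ℝ≥0∞) (ϕ' : Vec d → ℝ≥0∞)
    (y : Vec d) (W : Mat d k) (h : Vec k) (r : Vec d) : ℝ≥0∞ :=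
  ENNReal.ofReal (‖y - matMulVec W h - r‖ ^ 2 / 2) + φ h + ϕ' r

/-- Convexity for functions with values in `[0,∞]`. -/
def ConvexFnENN {E : Type*} [AddCommMonoid E] [Module ℝ E] (γ : E → ℝ≥0∞) : Prop :=
  ∀ x y : E, ∀ a b : ℝ, 0 ≤ a → 0 ≤ b → a + b = 1 →
    γ (a • x + b • y) ≤ ENNReal.ofReal a * γ x + ENNReal.ofReal b * γ y

/-- The matrix `(W h + r − y) hᵀ`, the claimed gradient of `ℓ₂(y, ·)` at `W`
    (with `h = h*(y,W)`, `r = r*(y,W)`). -/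
def gradFormula {d k : ℕ} (y : Vec d) (W : Mat d k) (h : Vec k) (r : Vec d) : Mat d k :=
  (WithLp.equiv 2 (Fin d × Fin k → ℝ)).symm
    (fun p => (matMulVec W h + r - y) p.1 * h p.2)


theorem mm_add {d k : ℕ} (W V : Mat d k) (h : Vec k) :
    matMulVec (W + V) h = matMulVec W h + matMulVec V h := by
  ext i
  simp [matMulVec, add_mul, Finset.sum_add_distrib]

theorem mm_smul {d k : ℕ} (c : ℝ) (W : Mat d k) (h : Vec k) :
    matMulVec (c • W) h = c • matMulVec W h := by
  ext i
  simp [matMulVec, Finset.mul_sum, mul_assoc]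

theorem mm_sub_right {d k : ℕ} (W : Mat d k) (h h' : Vec k) :
    matMulVec W (h - h') = matMulVec W h - matMulVec W h' := by
  ext i
  simp [matMulVec, mul_sub, Finset.sum_sub_distrib]

theorem mm_cont {d k : ℕ} : Continuous (fun p : Mat d k × Vec k => matMulVec p.1 p.2) := by
  unfold matMulVec
  apply (PiLp.continuous_toLp 2 _).comp
  fun_prop

theorem mm_cont' {d k : ℕ} {X : Type*} [TopologicalSpace X] {f : X → Mat d k} {g : X → Vec k}
    (hf : Continuous f) (hg : Continuous g) : Continuous (fun x => matMulVec (f x) (g x)) :=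
  mm_cont.comp (hf.prodMk hg)

theorem mm_norm {d k : ℕ} (W : Mat d k) (h : Vec k) : ‖matMulVec W h‖ ≤ ‖W‖ * ‖h‖ := by
  refine (pow_le_pow_iff_left₀ (norm_nonneg _) (by positivity) two_ne_zero).1 ?_
  rw [mul_pow, EuclideanSpace.norm_sq_eq, EuclideanSpace.norm_sq_eq, EuclideanSpace.norm_sq_eq,
    Fintype.sum_prod_type, Finset.sum_mul]
  apply Finset.sum_le_sum
  intro i _
  simp only [Real.norm_eq_abs, sq_abs]
  exact Finset.sum_mul_sq_le_sq_mul_sq (R := ℝ) Finset.univ (fun j => W (i, j)) (fun j => h j)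

theorem mm_grad {d k : ℕ} (y : Vec d) (W V : Mat d k) (h : Vec k) (r : Vec d) :
    inner ℝ (gradFormula y W h r) V = - inner ℝ (y - matMulVec W h - r) (matMulVec V h) := by
  simp only [PiLp.inner_apply, gradFormula, Fintype.sum_prod_type]
  rw [← Finset.sum_neg_distrib]
  apply Finset.sum_congr rfl
  intro i _
  have : (matMulVec V h) i = ∑ j, V (i, j) * h j := rfl
  simp only [this, RCLike.inner_apply, conj_trivial]
  rw [Finset.sum_mul, ← Finset.sum_neg_distrib]
  apply Finset.sum_congr rfl
  intro j _
  simp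
  ring

/-- the residual -/
def uu {d k : ℕ} (p : Vec d × Mat d k) (z : Vec k × Vec d) : Vec d :=
  p.1 - matMulVec p.2 z.1 - z.2

theorem uu_cont {d k : ℕ} :
    Continuous (fun x : (Vec d × Mat d k) × (Vec k × Vec d) => uu x.1 x.2) := by
  unfold uu
  have := mm_cont' (d := d) (k := k) (X := (Vec d × Mat d k) × (Vec k × Vec d))
    (f := fun x => x.1.2) (g := fun x => x.2.1) (by fun_prop) (by fun_prop)
  fun_prop

/-- the derivative of the residual -/
def dl {d k : ℕ} (h : Vec k) : (Vec d × Mat d k) →L[ℝ] Vec d :=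
  LinearMap.toContinuousLinearMap
    { toFun := fun q => q.1 - matMulVec q.2 h
      map_add' := by intro x y; simp only [Prod.fst_add, Prod.snd_add, mm_add]; abel
      map_smul' := by
        intro c x
        simp only [Prod.smul_fst, Prod.smul_snd, mm_smul, smul_sub, RingHom.id_apply] }

theorem dl_apply {d k : ℕ} (h : Vec k) (q : Vec d × Mat d k) :
    dl h q = q.1 - matMulVec q.2 h := rfl

theorem dl_norm {d k : ℕ} (h : Vec k) (q : Vec d × Mat d k) : ‖dl h q‖ ≤ ‖q‖ * (1 + ‖h‖) := by
  rw [dl_apply]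
  have h1 := norm_sub_le q.1 (matMulVec q.2 h)
  have h2 := mm_norm q.2 h
  have h3 := norm_fst_le q
  have h4 := mul_le_mul_of_nonneg_right (norm_snd_le q) (norm_nonneg h)
  linarith

theorem dl_sub {d k : ℕ} (h h' : Vec k) (q : Vec d × Mat d k) :
    ‖dl h q - dl h' q‖ ≤ ‖q‖ * ‖h - h'‖ := by
  have : dl h q - dl h' q = - matMulVec q.2 (h - h') := by
    rw [dl_apply, dl_apply, mm_sub_right]; abel
  rw [this, norm_neg]
  exact (mm_norm _ _).trans (mul_le_mul_of_nonneg_right (norm_snd_le q) (norm_nonneg _))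

/-- the smooth part -/
def ff {d k : ℕ} (p : Vec d × Mat d k) (z : Vec k × Vec d) : ℝ := ‖uu p z‖ ^ 2 / 2

theorem ff_sub {d k : ℕ} (p p0 : Vec d × Mat d k) (z : Vec k × Vec d) :
    ff p z - ff p0 z = inner ℝ (uu p0 z) (dl z.1 (p - p0)) + ‖dl z.1 (p - p0)‖ ^ 2 / 2 := by
  have : uu p z = uu p0 z + dl z.1 (p - p0) := by
    rw [map_sub, dl_apply, dl_apply, uu, uu]; abel
  rw [ff, ff, this, norm_add_sq_real]
  ring

/-- the error modulus -/
def om {d k : ℕ} (p0 : Vec d × Mat d k) (z0 : Vec k × Vec d)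
    (p : Vec d × Mat d k) (z : Vec k × Vec d) : ℝ :=
  ‖uu p0 z - uu p0 z0‖ * (1 + ‖z.1‖) + ‖uu p0 z0‖ * ‖z.1 - z0.1‖
    + ‖p - p0‖ * (1 + ‖z.1‖) ^ 2 / 2

theorem ff_err {d k : ℕ} (p p0 : Vec d × Mat d k) (z z0 : Vec k × Vec d) :
    |ff p z - ff p0 z - inner ℝ (uu p0 z0) (dl z0.1 (p - p0))| ≤ om p0 z0 p z * ‖p - p0‖ := by
  have e : ff p z - ff p0 z - inner ℝ (uu p0 z0) (dl z0.1 (p - p0))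
      = inner ℝ (uu p0 z - uu p0 z0) (dl z.1 (p - p0))
        + inner ℝ (uu p0 z0) (dl z.1 (p - p0) - dl z0.1 (p - p0))
        + ‖dl z.1 (p - p0)‖ ^ 2 / 2 := by
    rw [ff_sub, inner_sub_left, inner_sub_right]; ring
  rw [e]
  have h1 := abs_real_inner_le_norm (uu p0 z - uu p0 z0) (dl z.1 (p - p0))
  have h2 := abs_real_inner_le_norm (uu p0 z0) (dl z.1 (p - p0) - dl z0.1 (p - p0))
  have h3 := dl_norm z.1 (p - p0)
  have h4 := dl_sub z.1 z0.1 (p - p0)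
  have h5 := mul_le_mul_of_nonneg_left h3 (norm_nonneg (uu p0 z - uu p0 z0))
  have h6 := mul_le_mul_of_nonneg_left h4 (norm_nonneg (uu p0 z0))
  have h7 := pow_le_pow_left₀ (norm_nonneg _) h3 2
  have h8 := abs_add_three (inner ℝ (uu p0 z - uu p0 z0) (dl z.1 (p - p0)))
    (inner ℝ (uu p0 z0) (dl z.1 (p - p0) - dl z0.1 (p - p0))) (‖dl z.1 (p - p0)‖ ^ 2 / 2)
  have h9 : |‖dl z.1 (p - p0)‖ ^ 2 / 2| = ‖dl z.1 (p - p0)‖ ^ 2 / 2 := abs_of_nonneg (by positivity)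
  unfold om
  nlinarith

theorem ff_cont {d k : ℕ} :
    Continuous (fun x : (Vec d × Mat d k) × (Vec k × Vec d) => ff x.1 x.2) := by
  unfold ff
  have := uu_cont (d := d) (k := k)
  fun_prop

theorem om_cont {d k : ℕ} (p0 : Vec d × Mat d k) (z0 : Vec k × Vec d) :
    Continuous (fun x : (Vec d × Mat d k) × (Vec k × Vec d) => om p0 z0 x.1 x.2) := by
  unfold om
  have : Continuous (fun x : (Vec d × Mat d k) × (Vec k × Vec d) => uu p0 x.2) :=
    uu_cont.comp (continuous_const.prodMk continuous_snd)
  fun_prop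

open Filter Topology in
theorem unif_small {X Z : Type*} [TopologicalSpace X] [TopologicalSpace Z] (S : Set Z)
    (hS : IsCompact S) (f : X → Z → ℝ) (hf : Continuous (fun x : X × Z => f x.1 x.2))
    (p0 : X) (η : ℝ) (hη : 0 < η) :
    ∀ᶠ p in 𝓝 p0, ∀ z ∈ S, |f p z - f p0 z| < η := by
  apply hS.eventually_forall_of_forall_eventually
  intro z _
  have h2 : Continuous (fun x : X × Z => f p0 x.2) :=
    hf.comp (continuous_const.prodMk continuous_snd)
  have hc : Continuous (fun x : X × Z => |f x.1 x.2 - f p0 x.2|) := (hf.sub h2).abs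
  exact (hc.tendsto (p0, z)).eventually (gt_mem_nhds (by simpa using hη))

open Filter Topology in
theorem danskin {d k : ℕ} (S : Set (Vec k × Vec d)) (hS : IsCompact S)
    (c : Vec k × Vec d → ℝ) (zs : Vec d × Mat d k → Vec k × Vec d) (hzs : ∀ p, zs p ∈ S)
    (ν : ℝ) (hν : 0 < ν)
    (hg : ∀ p q, ff p (zs p) + c (zs p) + ν * ‖zs q - zs p‖ ^ 2 ≤ ff p (zs q) + c (zs q))
    (p0 : Vec d × Mat d k) :
    HasFDerivAt (fun p => ff p (zs p) + c (zs p))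
      ((innerSL ℝ (uu p0 (zs p0))).comp (dl (zs p0).1)) p0 := by
  have hlim : Tendsto zs (𝓝 p0) (𝓝 (zs p0)) := by
    rw [Metric.tendsto_nhds]
    intro ε hε
    have hη : 0 < ν * ε ^ 2 / 2 := by positivity
    have key : ∀ᶠ p in 𝓝 p0, ∀ z ∈ S, |ff p z - ff p0 z| < ν * ε ^ 2 / 2 := by
      exact unif_small S hS ff ff_cont p0 _ hη
    filter_upwards [key] with p hp
    have a1 := abs_lt.1 (hp _ (hzs p))
    have a2 := abs_lt.1 (hp _ (hzs p0))
    have a3 := hg p0 p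
    have a4 := hg p p0
    have a5 : 0 ≤ ν * ‖zs p0 - zs p‖ ^ 2 := by positivity
    rw [dist_eq_norm]
    have a6 : ν * ‖zs p - zs p0‖ ^ 2 < ν * ε ^ 2 := by linarith
    exact lt_of_pow_lt_pow_left₀ 2 hε.le (lt_of_mul_lt_mul_left a6 hν.le)
  have h0 : om p0 (zs p0) p0 (zs p0) = 0 := by simp [om]
  have hom1 : Tendsto (fun p => om p0 (zs p0) p (zs p)) (𝓝 p0) (𝓝 0) := by
    have := ((om_cont p0 (zs p0)).tendsto (p0, zs p0)).comp (tendsto_id.prodMk_nhds hlim)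
    simpa only [h0, Function.comp_def, id] using this
  have hom2 : Tendsto (fun p => om p0 (zs p0) p (zs p0)) (𝓝 p0) (𝓝 0) := by
    have := ((om_cont p0 (zs p0)).tendsto (p0, zs p0)).comp
      (tendsto_id.prodMk_nhds (tendsto_const_nhds (x := zs p0)))
    simpa only [h0, Function.comp_def, id] using this
  rw [hasFDerivAt_iff_isLittleO, Asymptotics.isLittleO_iff]
  intro ε hε
  filter_upwards [hom1.eventually (gt_mem_nhds hε), hom2.eventually (gt_mem_nhds hε)] with p b1 b2
  have a3 := hg p0 p
  have a4 := hg p p0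
  have a5 : 0 ≤ ν * ‖zs p0 - zs p‖ ^ 2 := by positivity
  have a6 : 0 ≤ ν * ‖zs p - zs p0‖ ^ 2 := by positivity
  have c1 := abs_le.1 (ff_err p p0 (zs p) (zs p0))
  have c2 := abs_le.1 (ff_err p p0 (zs p0) (zs p0))
  have d1 := mul_le_mul_of_nonneg_right b1.le (norm_nonneg (p - p0))
  have d2 := mul_le_mul_of_nonneg_right b2.le (norm_nonneg (p - p0))
  rw [Real.norm_eq_abs, abs_le]
  simp only [ContinuousLinearMap.comp_apply, innerSL_apply_apply]
  constructor <;> linarith [c1.1, c1.2, c2.1, c2.2]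

/-- Smoothness of ℓ₂: differentiability and gradient formula.
The loss `ℓ₂(y,W) = min_{h∈H, r∈R} ℓ̃₂(y,W,h,r)` is differentiable on `ℝ^d × ℝ^{d×k}`,
and its partial gradient w.r.t. `W` is `(W h*(y,W) + r*(y,W) − y) h*(y,W)ᵀ`. -/
theorem ell2_differentiable_and_gradient {d k : ℕ}
    (φ : Vec k → ℝ≥0∞) (ϕ' : Vec d → ℝ≥0∞)
    (H : Set (Vec k)) (R : Set (Vec d)) (ν : ℝ) (hν : 0 < ν)
    (hφconv : ConvexFnENN φ) (hφproper : ∃ h, φ h ≠ ⊤) (hφclosed : LowerSemicontinuous φ)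
    (hϕconv : ConvexFnENN ϕ') (hϕproper : ∃ r, ϕ' r ≠ ⊤) (hϕclosed : LowerSemicontinuous ϕ')
    (hHne : H.Nonempty) (hHconv : Convex ℝ H) (hHcomp : IsCompact H)
    (hRne : R.Nonempty) (hRconv : Convex ℝ R) (hRcomp : IsCompact R)
    -- joint ν-strong convexity of `ℓ̃₂(y, W, ·, ·)` on `H × R`
    (hsc : ∀ (y : Vec d) (W : Mat d k), ∀ h₁ ∈ H, ∀ h₂ ∈ H, ∀ r₁ ∈ R, ∀ r₂ ∈ R,
      ∀ a b : ℝ, 0 ≤ a → 0 ≤ b → a + b = 1 →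
        ell2t φ ϕ' y W (a • h₁ + b • h₂) (a • r₁ + b • r₂)
            + ENNReal.ofReal (ν / 2 * (a * b) * (‖h₁ - h₂‖ ^ 2 + ‖r₁ - r₂‖ ^ 2))
          ≤ ENNReal.ofReal a * ell2t φ ϕ' y W h₁ r₁ + ENNReal.ofReal b * ell2t φ ϕ' y W h₂ r₂)
    -- `(hstar y W, rstar y W)` is the (unique) minimizer of `ℓ̃₂(y, W, ·, ·)` over `H × R`
    (hstar : Vec d → Mat d k → Vec k) (rstar : Vec d → Mat d k → Vec d)
    (hstar_mem : ∀ y W, hstar y W ∈ H) (rstar_mem : ∀ y W, rstar y W ∈ R)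
    (hmin : ∀ (y : Vec d) (W : Mat d k), ∀ h ∈ H, ∀ r ∈ R,
        ell2t φ ϕ' y W (hstar y W) (rstar y W) ≤ ell2t φ ϕ' y W h r)
    (huniq : ∀ (y : Vec d) (W : Mat d k), ∀ h ∈ H, ∀ r ∈ R,
        (∀ h' ∈ H, ∀ r' ∈ R, ell2t φ ϕ' y W h r ≤ ell2t φ ϕ' y W h' r') →
        h = hstar y W ∧ r = rstar y W)
    -- the minimum value is finite
    (hfin : ∀ (y : Vec d) (W : Mat d k), ell2t φ ϕ' y W (hstar y W) (rstar y W) ≠ ⊤) :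
    Differentiable ℝ (fun p : Vec d × Mat d k =>
        (ell2t φ ϕ' p.1 p.2 (hstar p.1 p.2) (rstar p.1 p.2)).toReal)
    ∧ ∀ (y : Vec d) (W : Mat d k),
        HasGradientAt (fun W' => (ell2t φ ϕ' y W' (hstar y W') (rstar y W')).toReal)
          (gradFormula y W (hstar y W) (rstar y W)) W := by
  have hφf : ∀ y W, φ (hstar y W) ≠ ⊤ := fun y W => by
    have := hfin y W
    simp only [ell2t, ne_eq, ENNReal.add_eq_top, not_or] at this
    exact this.1.2
  have hϕf : ∀ y W, ϕ' (rstar y W) ≠ ⊤ := fun y W => by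
    have := hfin y W
    simp only [ell2t, ne_eq, ENNReal.add_eq_top, not_or] at this
    exact this.2
  let c : Vec k × Vec d → ℝ := fun z => (φ z.1).toReal + (ϕ' z.2).toReal
  let zs : Vec d × Mat d k → Vec k × Vec d := fun p => (hstar p.1 p.2, rstar p.1 p.2)
  have hval : ∀ (p : Vec d × Mat d k) (z : Vec k × Vec d), φ z.1 ≠ ⊤ → ϕ' z.2 ≠ ⊤ →
      ell2t φ ϕ' p.1 p.2 z.1 z.2 = ENNReal.ofReal (ff p z + c z) := by
    intro p z h1 h2
    have e1 : (0 : ℝ) ≤ ff p z := by unfold ff; positivity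
    rw [ENNReal.ofReal_add e1 (by positivity),
      ENNReal.ofReal_add ENNReal.toReal_nonneg ENNReal.toReal_nonneg,
      ENNReal.ofReal_toReal h1, ENNReal.ofReal_toReal h2, ← add_assoc]
    rfl
  have hnn : ∀ p z, 0 ≤ ff p z + c z := by
    intro p z
    have e1 : (0 : ℝ) ≤ ff p z := by unfold ff; positivity
    have e2 : (0 : ℝ) ≤ c z := by positivity
    linarith
  have hg : ∀ p q, ff p (zs p) + c (zs p) + ν / 4 * ‖zs q - zs p‖ ^ 2
      ≤ ff p (zs q) + c (zs q) := by
    intro p q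
    have s := hsc p.1 p.2 (zs p).1 (hstar_mem _ _) (zs q).1 (hstar_mem _ _)
      (zs p).2 (rstar_mem _ _) (zs q).2 (rstar_mem _ _) (1/2) (1/2)
      (by norm_num) (by norm_num) (by norm_num)
    have m := hmin p.1 p.2 _ (hHconv (hstar_mem p.1 p.2) (hstar_mem q.1 q.2)
      (a := 1/2) (b := 1/2) (by norm_num) (by norm_num) (by norm_num)) _
      (hRconv (rstar_mem p.1 p.2) (rstar_mem q.1 q.2)
      (a := 1/2) (b := 1/2) (by norm_num) (by norm_num) (by norm_num))
    have t := (add_le_add_left m _).trans s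
    rw [hval p (zs p) (hφf _ _) (hϕf _ _), hval p (zs q) (hφf _ _) (hϕf _ _)] at t
    have hvp : ell2t φ ϕ' p.1 p.2 (hstar p.1 p.2) (rstar p.1 p.2)
        = ENNReal.ofReal (ff p (zs p) + c (zs p)) := hval p (zs p) (hφf _ _) (hϕf _ _)
    rw [← ENNReal.ofReal_mul (by norm_num), ← ENNReal.ofReal_mul (by norm_num),
      ← ENNReal.ofReal_add (hnn _ _) (by positivity),
      ← ENNReal.ofReal_add (mul_nonneg (by norm_num) (hnn _ _))
        (mul_nonneg (by norm_num) (hnn _ _)),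
      ENNReal.ofReal_le_ofReal_iff (add_nonneg (mul_nonneg (by norm_num) (hnn _ _))
        (mul_nonneg (by norm_num) (hnn _ _)))] at t
    have n : ‖zs q - zs p‖ ^ 2 ≤ ‖(zs p).1 - (zs q).1‖ ^ 2 + ‖(zs p).2 - (zs q).2‖ ^ 2 := by
      rw [norm_sub_rev (zs q), Prod.norm_def, Prod.fst_sub, Prod.snd_sub]
      rcases max_cases ‖(zs p).1 - (zs q).1‖ ‖(zs p).2 - (zs q).2‖ with h | h <;>
        rw [h.1] <;> nlinarith [sq_nonneg ‖(zs p).1 - (zs q).1‖, sq_nonneg ‖(zs p).2 - (zs q).2‖]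
    have n' := mul_le_mul_of_nonneg_left n (by positivity : 0 ≤ ν / 4)
    linarith
  have hD := danskin (H ×ˢ R) (hHcomp.prod hRcomp) c zs
    (fun p => ⟨hstar_mem _ _, rstar_mem _ _⟩) (ν / 4) (by positivity) hg
  have hfun : (fun p : Vec d × Mat d k =>
        (ell2t φ ϕ' p.1 p.2 (hstar p.1 p.2) (rstar p.1 p.2)).toReal)
      = fun p => ff p (zs p) + c (zs p) := by
    funext p
    have hvp : ell2t φ ϕ' p.1 p.2 (hstar p.1 p.2) (rstar p.1 p.2)
        = ENNReal.ofReal (ff p (zs p) + c (zs p)) := hval p (zs p) (hφf _ _) (hϕf _ _)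
    rw [hvp, ENNReal.toReal_ofReal (hnn _ _)]
  rw [← hfun] at hD
  refine ⟨fun p => (hD p).differentiableAt, fun y W => ?_⟩
  rw [hasGradientAt_iff_hasFDerivAt]
  have h2 := (hD (y, W)).comp W (hasFDerivAt_prodMk_right y W)
  refine h2.congr_fderiv ?_
  ext V
  simp only [ContinuousLinearMap.comp_apply, innerSL_apply_apply, InnerProductSpace.toDual_apply_apply,
    dl_apply, ContinuousLinearMap.inr_apply]
  rw [mm_grad, zero_sub, inner_neg_right]
  rfl
end
end

section
/- Let G₁, …, G_n : ℝ^{d×k} → ℝ^{d×k} be maps that are each L-Lipschitz with respect to the Frobenius norm, let Ḡ(W) = (1/n) Σ_{i=1}^n G_i(W), fix W, W⁰ ∈ ℝ^{d×k}, and let S be a uniformly random subset of {1,…,n} of size b (1 ≤ b ≤ n, n ≥ 2). Define the variance-reduced estimator V = (1/b) Σ_{i∈S} ( G_i(W) − G_i(W⁰) ) + Ḡ(W⁰). Then E_S[V] = Ḡ(W) and E_S[ ‖V − Ḡ(W)‖² ] ≤ α(n,b) L² ‖W − W⁰‖², where α(n,b) = (n − b)/(b(n − 1)). (In the paper this is applied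 with G_i(W) = ∇_W ℓ2(y_i, W).) -/
noncomputable section

lemma aux_count {n : ℕ} (b : ℕ) (T : Finset (Fin n)) :
    (∑ A ∈ Finset.powersetCard b (Finset.univ : Finset (Fin n)),
      (if Disjoint T A then (1 : ℝ) else 0)) = ((n - T.card).choose b : ℝ) := by
  rw [Finset.sum_boole]
  congr 1
  have : (Finset.powersetCard b (Finset.univ : Finset (Fin n))).filter (fun A => Disjoint T A)
      = Finset.powersetCard b Tᶜ := by
    ext A
    simp only [Finset.mem_filter, Finset.mem_powersetCard, Finset.subset_univ, true_and]
    rw [Finset.subset_compl_comm, ← Finset.subset_compl_iff_disjoint_right]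
    tauto
  rw [this, Finset.card_powersetCard, Finset.card_compl, Fintype.card_fin]

lemma aux_neg {E : Type*} [AddCommGroup E] [Module ℝ E] {n : ℕ} (y : Fin n → E)
    (hy : ∑ i, y i = 0) (A : Finset (Fin n)) :
    ∑ i ∈ A, y i = -∑ i, (if Disjoint {i} A then (1 : ℝ) else 0) • y i := by
  rw [eq_neg_iff_add_eq_zero, ← hy, ← Finset.sum_add_sum_compl A y]
  congr 1
  simp only [Finset.disjoint_singleton_left, ite_smul, one_smul, zero_smul]
  rw [← Finset.sum_filter]
  congr 1
  ext; simp

lemma aux_mean {E : Type*} [AddCommGroup E] [Module ℝ E] {n : ℕ} (b : ℕ) (y : Fin n → E)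
    (hy : ∑ i, y i = 0) :
    ∑ A ∈ Finset.powersetCard b (Finset.univ : Finset (Fin n)), ∑ i ∈ A, y i = 0 := by
  simp_rw [aux_neg y hy]
  rw [Finset.sum_neg_distrib, Finset.sum_comm]
  simp_rw [← Finset.sum_smul, aux_count, Finset.card_singleton]
  rw [← Finset.smul_sum, hy]; simp

lemma aux_var {E : Type*} [NormedAddCommGroup E] [InnerProductSpace ℝ E] {n : ℕ} (b : ℕ)
    (y : Fin n → E) (hy : ∑ i, y i = 0) :
    ∑ A ∈ Finset.powersetCard b (Finset.univ : Finset (Fin n)), ‖∑ i ∈ A, y i‖ ^ 2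
      = (((n - 1).choose b : ℝ) - ((n - 2).choose b : ℝ)) * ∑ i, ‖y i‖ ^ 2 := by
  have h1 : ∀ A : Finset (Fin n), ‖∑ i ∈ A, y i‖ ^ 2
      = ∑ i, ∑ j, (if Disjoint {i, j} A then (1 : ℝ) else 0) * inner ℝ (y i) (y j) := by
    intro A
    rw [aux_neg y hy, norm_neg, ← real_inner_self_eq_norm_sq, sum_inner]
    refine Finset.sum_congr rfl fun i _ => ?_
    rw [inner_sum]
    refine Finset.sum_congr rfl fun j _ => ?_
    rw [real_inner_smul_left, real_inner_smul_right]
    by_cases hi : i ∈ A <;> by_cases hj : j ∈ A <;> simp [hi, hj]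
  simp_rw [h1]
  rw [Finset.sum_comm]
  have h2 : ∀ i : Fin n, ∑ A ∈ Finset.powersetCard b (Finset.univ : Finset (Fin n)),
      ∑ j, (if Disjoint {i, j} A then (1 : ℝ) else 0) * inner ℝ (y i) (y j)
      = (((n - 1).choose b : ℝ) - ((n - 2).choose b : ℝ)) * ‖y i‖ ^ 2 := by
    intro i
    rw [Finset.sum_comm]
    simp_rw [← Finset.sum_mul, aux_count]
    have h3 : ∀ j : Fin n, ((n - ({i, j} : Finset (Fin n)).card).choose b : ℝ)
          * inner ℝ (y i) (y j)
        = ((n - 2).choose b : ℝ) * inner ℝ (y i) (y j)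
          + (if i = j then (((n - 1).choose b : ℝ) - ((n - 2).choose b : ℝ)) * ‖y i‖ ^ 2 else 0) := by
      intro j
      by_cases h : i = j
      · subst h
        simp [real_inner_self_eq_norm_sq]
        ring
      · simp [h, Finset.card_pair h]
    simp_rw [h3]
    rw [Finset.sum_add_distrib, ← Finset.mul_sum, ← inner_sum, hy]
    simp
  simp_rw [h2, ← Finset.mul_sum]

lemma aux_choose {n b : ℕ} (hn : 2 ≤ n) (hbn : b ≤ n) :
    (((n - 1).choose b : ℝ) - ((n - 2).choose b : ℝ)) * (n * (n - 1))
      = (n.choose b : ℝ) * ((n - b) * b) := by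
  obtain ⟨m, rfl⟩ : ∃ m, n = m + 2 := ⟨n - 2, by omega⟩
  have e1 := Nat.choose_mul_succ_eq (m + 1) b
  have e2 := Nat.choose_mul_succ_eq m b
  have e1' : ((m + 1).choose b : ℝ) * (m + 2) = ((m + 2).choose b : ℝ) * (m + 2 - b) := by
    have := congrArg (Nat.cast : ℕ → ℝ) e1
    push_cast [Nat.cast_sub (show b ≤ m + 1 + 1 from hbn)] at this
    linear_combination this
  have e2' : (m.choose b : ℝ) * (m + 1) = ((m + 1).choose b : ℝ) * (m + 1 - b) := by
    rcases Nat.lt_or_ge (m + 1) b with h | h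
    · rw [Nat.choose_eq_zero_of_lt h, Nat.choose_eq_zero_of_lt (show m < b by omega)]; simp
    · have := congrArg (Nat.cast : ℕ → ℝ) e2
      push_cast [Nat.cast_sub h] at this
      linear_combination this
  simp only [show m + 2 - 1 = m + 1 by omega, show m + 2 - 2 = m by omega]
  push_cast
  linear_combination (b : ℝ) * e1' - (m + 2 : ℝ) * e2'

/-- Unbiasedness and variance bound of the variance-reduced estimator.
With `G₁,…,G_n` each `L`-Lipschitz, `Ḡ = (1/n)∑ᵢ Gᵢ`, and
`V_A = (1/b)∑_{i∈A}(Gᵢ(W) − Gᵢ(W⁰)) + Ḡ(W⁰)` for a uniformly random size-`b` subset `A`,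
we have `E[V] = Ḡ(W)` and `E‖V − Ḡ(W)‖² ≤ α(n,b) L² ‖W − W⁰‖²`. -/
theorem variance_reduced_estimator_bound {d k n : ℕ} (hn : 2 ≤ n)
    (b : ℕ) (hb1 : 1 ≤ b) (hbn : b ≤ n)
    (L : ℝ) (hL : 0 < L)
    (G : Fin n → Mat d k → Mat d k)
    (hGlip : ∀ i, ∀ x y : Mat d k, ‖G i x - G i y‖ ≤ L * ‖x - y‖)
    (W W0 : Mat d k) :
    (1 / (n.choose b) : ℝ) •
        ∑ A ∈ Finset.powersetCard b (Finset.univ : Finset (Fin n)),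
          ((1 / b : ℝ) • ∑ i ∈ A, (G i W - G i W0) + (1 / n : ℝ) • ∑ i, G i W0)
      = (1 / n : ℝ) • ∑ i, G i W
    ∧ (1 / (n.choose b) : ℝ) *
        ∑ A ∈ Finset.powersetCard b (Finset.univ : Finset (Fin n)),
          ‖(1 / b : ℝ) • ∑ i ∈ A, (G i W - G i W0) + (1 / n : ℝ) • ∑ i, G i W0
              - (1 / n : ℝ) • ∑ i, G i W‖ ^ 2
      ≤ ((n - b) / (b * (n - 1)) : ℝ) * L ^ 2 * ‖W - W0‖ ^ 2 := by
  have hn0 : (n : ℝ) ≠ 0 := by positivity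
  have hb0 : (b : ℝ) ≠ 0 := by positivity
  have hn1 : (n : ℝ) - 1 > 0 := by
    have : (2 : ℝ) ≤ n := by exact_mod_cast hn
    linarith
  have hC : (0 : ℝ) < n.choose b := by exact_mod_cast Nat.choose_pos hbn
  set m : Mat d k := (1 / n : ℝ) • ∑ i, (G i W - G i W0) with hm
  set y : Fin n → Mat d k := fun i => (G i W - G i W0) - m with hy
  have hnm : (n : ℝ) • m = ∑ i, (G i W - G i W0) := by
    rw [hm, smul_smul, mul_one_div_cancel hn0, one_smul]
  have hy0 : ∑ i, y i = 0 := by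
    simp only [hy]
    rw [Finset.sum_sub_distrib, ← hnm]
    simp [← Nat.cast_smul_eq_nsmul ℝ]
  have hV : ∀ A ∈ Finset.powersetCard b (Finset.univ : Finset (Fin n)),
      (1 / b : ℝ) • ∑ i ∈ A, (G i W - G i W0) + (1 / n : ℝ) • ∑ i, G i W0
        = (1 / b : ℝ) • ∑ i ∈ A, y i + (1 / n : ℝ) • ∑ i, G i W := by
    intro A hA
    have hc := (Finset.mem_powersetCard.1 hA).2
    have e : ∑ i ∈ A, y i = ∑ i ∈ A, (G i W - G i W0) - (b : ℝ) • m := by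
      simp only [hy]
      rw [Finset.sum_sub_distrib, Finset.sum_const, hc, Nat.cast_smul_eq_nsmul]
    rw [e, smul_sub, smul_smul, one_div_mul_cancel hb0, one_smul, hm, Finset.sum_sub_distrib (s := Finset.univ),
      smul_sub (1 / n : ℝ)]
    abel
  constructor
  · rw [Finset.sum_congr rfl hV, Finset.sum_add_distrib, ← Finset.smul_sum, aux_mean b y hy0,
      smul_zero, zero_add, Finset.sum_const, Finset.card_powersetCard, Finset.card_univ,
      Fintype.card_fin, ← Nat.cast_smul_eq_nsmul ℝ, smul_smul, one_div_mul_cancel hC.ne', one_smul]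
  · have h1 : ∀ A ∈ Finset.powersetCard b (Finset.univ : Finset (Fin n)),
        ‖(1 / b : ℝ) • ∑ i ∈ A, (G i W - G i W0) + (1 / n : ℝ) • ∑ i, G i W0
              - (1 / n : ℝ) • ∑ i, G i W‖ ^ 2 = (1 / b : ℝ) ^ 2 * ‖∑ i ∈ A, y i‖ ^ 2 := by
      intro A hA
      rw [hV A hA, add_sub_cancel_right, norm_smul, mul_pow, Real.norm_eq_abs, sq_abs]
    rw [Finset.sum_congr rfl h1, ← Finset.mul_sum, aux_var b y hy0]
    have h2 : ∑ i, ‖y i‖ ^ 2 ≤ n * (L ^ 2 * ‖W - W0‖ ^ 2) := by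
      have h3 : ∑ i, ‖y i‖ ^ 2 = ∑ i, ‖G i W - G i W0‖ ^ 2 - n * ‖m‖ ^ 2 := by
        have h4 : ∀ i, ‖y i‖ ^ 2 = ‖G i W - G i W0‖ ^ 2 - ‖m‖ ^ 2 - 2 * inner ℝ (y i) m := by
          intro i
          have : G i W - G i W0 = y i + m := by simp [hy]
          rw [this, norm_add_sq_real]; ring
        rw [Finset.sum_congr rfl fun i _ => h4 i, Finset.sum_sub_distrib, Finset.sum_sub_distrib,
          ← Finset.mul_sum, ← sum_inner, hy0]
        simp
      have h5 : ∑ i, ‖G i W - G i W0‖ ^ 2 ≤ ∑ _i : Fin n, (L ^ 2 * ‖W - W0‖ ^ 2) := by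
        refine Finset.sum_le_sum fun i _ => ?_
        rw [← mul_pow]
        exact pow_le_pow_left₀ (norm_nonneg _) (hGlip i W W0) 2
      simp only [Finset.sum_const, Finset.card_univ, Fintype.card_fin, nsmul_eq_mul] at h5
      have : 0 ≤ (n : ℝ) * ‖m‖ ^ 2 := by positivity
      linarith
    have hc := aux_choose hn hbn
    have hbn' : (0 : ℝ) ≤ n - b := by
      have : (b : ℝ) ≤ n := by exact_mod_cast hbn
      linarith
    have hc' : (((n - 1).choose b : ℝ) - ((n - 2).choose b : ℝ))
        = (n.choose b : ℝ) * ((n - b) * b) / (n * (n - 1)) := by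
      rw [eq_div_iff (by positivity)]; exact hc
    rw [hc']
    calc _ = ((n - b) / (b * (n - 1)) / n : ℝ) * ∑ i, ‖y i‖ ^ 2 := by
          have := hC.ne'
          have := hn1.ne'
          field_simp
      _ ≤ ((n - b) / (b * (n - 1)) / n : ℝ) * (n * (L ^ 2 * ‖W - W0‖ ^ 2)) := by
          gcongr
      _ = _ := by
          have := hn1.ne'
          field_simp
end
end

section
/- Let h = h₁ + h₂ on a Euclidean space ℰ, where h₁: ℰ → ℝ is differentiable with L-Lipschitz gradient and h₂: ℰ → [0,∞] is proper, closed and convex. Fix η > 0, x ∈ ℰ, d ∈ ℰ, and let y = prox_{η h₂}(x − η d). Then for every z ∈ ℰ: h(y) ≤ h(z) + ⟨y − z, ∇h₁(x) − d⟩ + (L/2 − 1/(2η)) ‖y − x‖² + (L/2 + 1/(2η)) ‖z − x‖² − (1/(2η)) ‖y − z‖². -/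
open scoped RealInnerProductSpace ENNReal

noncomputable section

/-- `p = prox_{ηγ}(x)`, i.e. `p` minimizes `u ↦ ηγ(u) + (1/2)‖u − x‖²`. -/
def IsProxPt {E : Type*} [NormedAddCommGroup E] (γ : E → ℝ≥0∞) (η : ℝ) (x p : E) : Prop :=
  ∀ u : E, ENNReal.ofReal η * γ p + ENNReal.ofReal (‖p - x‖ ^ 2 / 2)
      ≤ ENNReal.ofReal η * γ u + ENNReal.ofReal (‖u - x‖ ^ 2 / 2)

lemma descent_aux {E : Type*}
    [NormedAddCommGroup E] [InnerProductSpace ℝ E] [CompleteSpace E]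
    (h₁ : E → ℝ) (L : ℝ)
    (hdiff : Differentiable ℝ h₁)
    (hlip : ∀ a b : E, ‖gradient h₁ a - gradient h₁ b‖ ≤ L * ‖a - b‖) (x w : E) (s : ℝ)
    (hs : |s| = 1) :
    s * (h₁ (x + w) - h₁ x - ⟪gradient h₁ x, w⟫) ≤ L / 2 * ‖w‖ ^ 2 := by
  let ψ : ℝ → ℝ := fun t => s * (h₁ (x + t • w) - h₁ x - t * ⟪gradient h₁ x, w⟫)
    - L / 2 * t ^ 2 * ‖w‖ ^ 2
  have hd : ∀ t, HasDerivAt ψ (s * (⟪gradient h₁ (x + t • w), w⟫ - ⟪gradient h₁ x, w⟫)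
      - L * t * ‖w‖ ^ 2) t := by
    intro t
    have h1 := (hdiff (x + t • w)).hasGradientAt.hasFDerivAt
    have h2 : HasDerivAt (fun t : ℝ => x + t • w) w t := by
      simpa using ((hasDerivAt_id t).smul_const w).const_add x
    have h3 := h1.comp_hasDerivAt t h2
    have h4 := ((h3.sub_const (h₁ x)).sub
      ((hasDerivAt_id t).mul_const ⟪gradient h₁ x, w⟫)).const_mul s
    have h5 := h4.sub ((((hasDerivAt_id t).pow 2).const_mul (L / 2)).mul_const (‖w‖ ^ 2))
    refine h5.congr_deriv ?_
    rw [InnerProductSpace.toDual_apply_apply]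
    simp only [id, Nat.cast_ofNat]
    ring
  have hanti : AntitoneOn ψ (Set.Ici 0) := by
    apply antitoneOn_of_deriv_nonpos (convex_Ici 0)
    · exact fun t _ => (hd t).continuousAt.continuousWithinAt
    · exact fun t _ => (hd t).differentiableAt.differentiableWithinAt
    · intro t ht
      rw [interior_Ici] at ht
      have ht : 0 < t := ht
      rw [(hd t).deriv, ← inner_sub_left]
      have e1 : s * ⟪gradient h₁ (x + t • w) - gradient h₁ x, w⟫
          ≤ |⟪gradient h₁ (x + t • w) - gradient h₁ x, w⟫| := by
        refine (le_abs_self _).trans ?_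
        rw [abs_mul, hs, one_mul]
      have e2 := abs_real_inner_le_norm (gradient h₁ (x + t • w) - gradient h₁ x) w
      have e3 := hlip (x + t • w) x
      rw [add_sub_cancel_left, norm_smul, Real.norm_of_nonneg ht.le] at e3
      have e4 := mul_le_mul_of_nonneg_right e3 (norm_nonneg w)
      nlinarith
  have := hanti (Set.mem_Ici.2 le_rfl) (Set.mem_Ici.2 zero_le_one) zero_le_one
  simp only [ψ, one_smul, zero_smul, add_zero] at this
  linarith

lemma prox_aux {E : Type*}
    [NormedAddCommGroup E] [InnerProductSpace ℝ E]
    (γ : E → ℝ≥0∞) (hconv : ConvexFnENN γ) (η : ℝ) (hη : 0 < η) (v y z : E)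
    (hy : IsProxPt γ η v y) (hyt : γ y ≠ ⊤) (hzt : γ z ≠ ⊤) :
    η * (γ y).toReal + ‖y - v‖ ^ 2 / 2 + ‖y - z‖ ^ 2 / 2
      ≤ η * (γ z).toReal + ‖z - v‖ ^ 2 / 2 := by
  have key : ∀ t : ℝ, 0 < t → t < 1 →
      η * (γ y).toReal + ‖y - v‖ ^ 2 / 2 + (1 - t) * (‖y - z‖ ^ 2 / 2)
      ≤ η * (γ z).toReal + ‖z - v‖ ^ 2 / 2 := by
    intro t h0 h1
    have h1' : 0 ≤ 1 - t := by linarith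
    have A := hy ((1 - t) • y + t • z)
    have B := hconv y z (1 - t) t h1' h0.le (by ring)
    have C := A.trans (add_le_add_left (mul_le_mul_right B (ENNReal.ofReal η)) _)
    rw [← ENNReal.ofReal_toReal hyt, ← ENNReal.ofReal_toReal hzt,
      ← ENNReal.ofReal_mul h1', ← ENNReal.ofReal_mul h0.le, ← ENNReal.ofReal_add (by positivity)
      (by positivity), ← ENNReal.ofReal_mul hη.le, ← ENNReal.ofReal_mul hη.le,
      ← ENNReal.ofReal_add (by positivity) (by positivity),
      ← ENNReal.ofReal_add (by positivity) (by positivity),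
      ENNReal.ofReal_le_ofReal_iff (by positivity)] at C
    have D : ‖(1 - t) • y + t • z - v‖ ^ 2 = (1 - t) * ‖y - v‖ ^ 2 + t * ‖z - v‖ ^ 2
        - t * (1 - t) * ‖y - z‖ ^ 2 := by
      have a1 : (1 - t) • y + t • z - v = (1 - t) • (y - v) + t • (z - v) := by module
      have a2 : y - z = (y - v) - (z - v) := by abel
      rw [a1, a2, norm_add_sq_real, norm_sub_sq_real (y - v) (z - v), norm_smul, norm_smul, inner_smul_left,
        inner_smul_right, Real.norm_of_nonneg h1', Real.norm_of_nonneg h0.le]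
      simp only [conj_trivial]
      ring
    rw [D] at C
    refine le_of_mul_le_mul_left ?_ h0
    linarith
  have hlim : Filter.Tendsto (fun t : ℝ => η * (γ y).toReal + ‖y - v‖ ^ 2 / 2
      + (1 - t) * (‖y - z‖ ^ 2 / 2)) (nhdsWithin 0 (Set.Ioi 0))
      (nhds (η * (γ y).toReal + ‖y - v‖ ^ 2 / 2 + (1 - 0) * (‖y - z‖ ^ 2 / 2))) := by
    apply Filter.Tendsto.mono_left _ nhdsWithin_le_nhds
    apply Continuous.tendsto
    fun_prop
  rw [sub_zero, one_mul] at hlim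
  refine le_of_tendsto hlim ?_
  filter_upwards [Ioo_mem_nhdsGT (zero_lt_one' ℝ)] with t ht
  exact key t ht.1 ht.2

/-- Upper bound for a composite function after a proximal step;
Lemma S-6 of the paper. Here `h = h₁ + h₂` takes values in `(-∞, ∞]`, modeled in `EReal`. -/
theorem composite_prox_upper_bound {E : Type*}
    [NormedAddCommGroup E] [InnerProductSpace ℝ E] [CompleteSpace E]
    (h₁ : E → ℝ) (h₂ : E → ℝ≥0∞) (L : ℝ) (hL : 0 ≤ L)
    (hdiff : Differentiable ℝ h₁)
    (hlip : ∀ a b : E, ‖gradient h₁ a - gradient h₁ b‖ ≤ L * ‖a - b‖)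
    (hconv : ConvexFnENN h₂) (hproper : ∃ x, h₂ x ≠ ⊤) (hclosed : LowerSemicontinuous h₂)
    (η : ℝ) (hη : 0 < η) (x d y : E)
    (hy : IsProxPt h₂ η (x - η • d) y) :
    ∀ z : E,
      (h₁ y : EReal) + (h₂ y : EReal)
        ≤ (h₁ z : EReal) + (h₂ z : EReal)
          + ((⟪y - z, gradient h₁ x - d⟫ + (L / 2 - 1 / (2 * η)) * ‖y - x‖ ^ 2
              + (L / 2 + 1 / (2 * η)) * ‖z - x‖ ^ 2
              - (1 / (2 * η)) * ‖y - z‖ ^ 2 : ℝ) : EReal) := by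
  intro z
  by_cases hzt : h₂ z = ⊤
  · rw [hzt, EReal.coe_ennreal_top, EReal.coe_add_top, EReal.top_add_coe]
    exact le_top
  have hyt : h₂ y ≠ ⊤ := by
    intro h
    have := hy z
    rw [h, ENNReal.mul_top (by simpa using hη), top_add, top_le_iff] at this
    exact ENNReal.add_ne_top.2 ⟨ENNReal.mul_ne_top ENNReal.ofReal_ne_top hzt,
      ENNReal.ofReal_ne_top⟩ this
  have P := prox_aux h₂ hconv η hη _ y z hy hyt hzt
  have D1 := descent_aux h₁ L hdiff hlip x (y - x) 1 (by simp)
  have D2 := descent_aux h₁ L hdiff hlip x (z - x) (-1) (by simp)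
  rw [add_sub_cancel] at D1 D2
  rw [← EReal.coe_ennreal_toReal hyt, ← EReal.coe_ennreal_toReal hzt]
  norm_cast
  have n1 : ∀ u : E, ‖u - (x - η • d)‖ ^ 2 = ‖u - x‖ ^ 2 + 2 * η * ⟪u - x, d⟫
      + ‖η • d‖ ^ 2 := by
    intro u
    rw [show u - (x - η • d) = (u - x) + η • d by abel, norm_add_sq_real, inner_smul_right]
    ring
  rw [n1, n1] at P
  have i1 : ⟪y - z, gradient h₁ x - d⟫ = ⟪gradient h₁ x, y - x⟫ - ⟪gradient h₁ x, z - x⟫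
      - (⟪y - x, d⟫ - ⟪z - x, d⟫) := by
    rw [← inner_sub_right, ← inner_sub_left, sub_sub_sub_cancel_right, inner_sub_right,
      real_inner_comm]
  rw [i1]
  have Q : (h₂ y).toReal ≤ (h₂ z).toReal + (1 / (2 * η)) * (‖z - x‖ ^ 2 - ‖y - x‖ ^ 2
      - ‖y - z‖ ^ 2) + ⟪z - x, d⟫ - ⟪y - x, d⟫ := by
    refine le_of_mul_le_mul_left ?_ hη
    have : η * (1 / (2 * η)) = 1 / 2 := by field_simp
    have e : η * ((h₂ z).toReal + (1 / (2 * η)) * (‖z - x‖ ^ 2 - ‖y - x‖ ^ 2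
      - ‖y - z‖ ^ 2) + ⟪z - x, d⟫ - ⟪y - x, d⟫) = η * (h₂ z).toReal
      + 1 / 2 * (‖z - x‖ ^ 2 - ‖y - x‖ ^ 2
      - ‖y - z‖ ^ 2) + η * ⟪z - x, d⟫ - η * ⟪y - x, d⟫ := by rw [← this]; ring
    rw [e]
    linarith
  linarith
end
end

section
/- (Main convergence theorem.) Let g₁, …, g_n : ℝ^{d×k} → ℝ be differentiable with each ∇g_i L-Lipschitz (Frobenius norm), g = (1/n) Σ_i g_i, ψ′: ℝ^{d×k} → [0,∞] proper, closed and convex (ψ′ = ψ + δ_C for the dictionary constraint set C and regularizer ψ), f′ = g + ψ′, and f* = min f′ (attained and finite). Fix integers m, S, b ≥ 1 with b ≤ n, n ≥ 2, θ > 2, step size η = 1/(θL), and suppose θ(θ−1) ≥ 2m(m+1)α(n,b). Define random iterates: W^{0,0} ∈ dom ψ′ is deterministic; for s = 0,…,S−1 and t = 0,…,m−1, B_{s,t} is a uniformly random size-b subset of {1,…,n}, independent across (s,t); V_{s,t} = (1/b) Σ_{j∈B_{s,t}} ( ∇g_j(W^{s,t}) − ∇g_j(W^{s,0}) ) + ∇g(W^{s,0});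 W^{s,t+1} = prox_{ηψ′}( W^{s,t} − η V_{s,t} ); and W^{s+1,0} = W^{s,m}. Then (1/(mS)) Σ_{s=0}^{S−1} Σ_{t=0}^{m−1} E[ ‖Γ_{f′,η}(W^{s,t})‖² ] ≤ ( f′(W^{0,0}) − f* ) / ( η (1/2 − ηL) m S ). Equivalently, if W_final is chosen uniformly at random from {W^{s,t}}_{0≤s<S, 0≤t<m}, then E[ ‖Γ_{f′,η}(W_final)‖² ] ≤ ( f′(W^{0,0}) − f* ) / ( η (1/2 − ηL) m S ). -/
open scoped RealInnerProductSpace ENNReal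

noncomputable section

/-- `g = (1/n) ∑ᵢ gᵢ`. -/
def avgFn {n : ℕ} {E : Type*} (g : Fin n → E → ℝ) (x : E) : ℝ := (1 / n : ℝ) * ∑ i, g i x

/-- The gradient mapping `Γ_{f′,η}(x) = (1/η)(x − prox_{ηψ′}(x − η ∇g(x)))`, expressed via a
given proximal map `prox` (of `ηψ′`) and gradient map `gr = ∇g`. -/
def gradMapping {E : Type*} [NormedAddCommGroup E] [Module ℝ E]
    (prox : E → E) (gr : E → E) (η : ℝ) (x : E) : E :=
  (1 / η) • (x - prox (x - η • gr x))

/-- The sample space for the batches: one uniformly random size-`b` subset of `{1,…,n}` for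
each inner iteration `(s,t)`; the uniform distribution on this product space makes the
batches independent and uniform. -/
abbrev BatchSpace (n S m b : ℕ) := (Fin S × Fin m) → {A : Finset (Fin n) // A.card = b}

section Aux

variable {E : Type*} [NormedAddCommGroup E] [InnerProductSpace ℝ E]

theorem aux_descent [CompleteSpace E] (f : E → ℝ) (f' : E → E)
    (hf : ∀ x, HasGradientAt f (f' x) x) (L : ℝ)
    (hlip : ∀ x y, ‖f' x - f' y‖ ≤ L * ‖x - y‖) (x y : E) :
    f y ≤ f x + ⟪f' x, y - x⟫ + L / 2 * ‖y - x‖ ^ 2 := by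
  set v := y - x with hv
  have hd : ∀ t : ℝ, HasDerivAt (fun t : ℝ => f (x + t • v) - t * ⟪f' x, v⟫ - L / 2 * t ^ 2 * ‖v‖ ^ 2)
      (⟪f' (x + t • v), v⟫ - ⟪f' x, v⟫ - L * t * ‖v‖ ^ 2) t := by
    intro t
    have h1 : HasDerivAt (fun t : ℝ => x + t • v) v t := by
      simpa using ((hasDerivAt_id t).smul_const v).const_add x
    have h2 := (hasGradientAt_iff_hasFDerivAt.1 (hf (x + t • v))).comp_hasDerivAt t h1
    have h3 : HasDerivAt (fun t : ℝ => t * ⟪f' x, v⟫) ⟪f' x, v⟫ t := by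
      simpa using (hasDerivAt_id t).mul_const ⟪f' x, v⟫
    have h4 : HasDerivAt (fun t : ℝ => L / 2 * t ^ 2 * ‖v‖ ^ 2) (L * t * ‖v‖ ^ 2) t := by
      have := ((hasDerivAt_pow 2 t).const_mul (L / 2)).mul_const (‖v‖ ^ 2)
      convert! this using 1
      push_cast; ring
    have := (h2.sub h3).sub h4
    simp only [InnerProductSpace.toDual_apply_apply] at this
    exact this
  have hanti : AntitoneOn (fun t : ℝ => f (x + t • v) - t * ⟪f' x, v⟫ - L / 2 * t ^ 2 * ‖v‖ ^ 2)
      (Set.Icc 0 1) := by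
    apply antitoneOn_of_deriv_nonpos (convex_Icc 0 1)
    · exact fun t _ => (hd t).continuousAt.continuousWithinAt
    · exact fun t _ => (hd t).differentiableAt.differentiableWithinAt
    · intro t ht
      rw [interior_Icc] at ht
      rw [(hd t).deriv, ← inner_sub_left]
      have h5 := real_inner_le_norm (f' (x + t • v) - f' x) v
      have h6 := hlip (x + t • v) x
      rw [add_sub_cancel_left, norm_smul, Real.norm_of_nonneg ht.1.le] at h6
      have := mul_le_mul_of_nonneg_right h6 (norm_nonneg v)
      nlinarith
  have := hanti (Set.left_mem_Icc.2 zero_le_one) (Set.right_mem_Icc.2 zero_le_one) zero_le_one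
  simp only [one_smul, zero_smul, add_zero] at this
  have hxy : x + v = y := by rw [hv]; abel
  rw [hxy] at this
  linarith

theorem aux_ascent [CompleteSpace E] (f : E → ℝ) (f' : E → E)
    (hf : ∀ x, HasGradientAt f (f' x) x) (L : ℝ)
    (hlip : ∀ x y, ‖f' x - f' y‖ ≤ L * ‖x - y‖) (x y : E) :
    f x + ⟪f' x, y - x⟫ - L / 2 * ‖y - x‖ ^ 2 ≤ f y := by
  have := aux_descent (fun x => - f x) (fun x => - f' x) (fun x => by
    have := (hasGradientAt_iff_hasFDerivAt.1 (hf x)).neg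
    rw [hasGradientAt_iff_hasFDerivAt, map_neg]; exact this) L (fun x y => by
      rw [neg_sub_neg, norm_sub_rev]; exact hlip x y) x y
  rw [inner_neg_left] at this
  linarith

theorem aux_prox (ψ : E → ℝ≥0∞) (hc : ConvexFnENN ψ) (η : ℝ) (hη : 0 < η) (x p z : E)
    (hp : IsProxPt ψ η x p) (hz : ψ z ≠ ⊤) :
    ψ p ≠ ⊤ ∧ η * (ψ p).toReal + ‖p - x‖ ^ 2 / 2 + ‖z - p‖ ^ 2 / 2 ≤
      η * (ψ z).toReal + ‖z - x‖ ^ 2 / 2 := by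
  have hfin : ψ p ≠ ⊤ := by
    intro h
    have := hp z
    rw [h, ENNReal.mul_top (by simpa using hη), top_add, top_le_iff] at this
    exact (ENNReal.add_ne_top.2 ⟨ENNReal.mul_ne_top ENNReal.ofReal_ne_top hz,
      ENNReal.ofReal_ne_top⟩) this
  refine ⟨hfin, ?_⟩
  have key : ∀ a : ℝ, 0 < a → a < 1 → 
     η * (ψ p).toReal + ‖p - x‖ ^ 2 / 2 + (1 - a) * (‖z - p‖ ^ 2 / 2) ≤
      η * (ψ z).toReal + ‖z - x‖ ^ 2 / 2 := by
    intro a ha ha1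
    have h1 := (hp ((1 - a) • p + a • z)).trans (add_le_add_left (mul_le_mul_right 
      (hc p z (1 - a) a (by linarith) ha.le (by ring)) (ENNReal.ofReal η)) _)
    have h2 := ENNReal.toReal_mono (by finiteness) h1
    rw [ENNReal.toReal_add (by finiteness) (by finiteness),
      ENNReal.toReal_add (by finiteness) (by finiteness), ENNReal.toReal_mul, ENNReal.toReal_mul,
      ENNReal.toReal_add (by finiteness) (by finiteness), ENNReal.toReal_mul, ENNReal.toReal_mul,
      ENNReal.toReal_ofReal hη.le, ENNReal.toReal_ofReal (by positivity),
      ENNReal.toReal_ofReal (sub_nonneg.2 ha1.le), ENNReal.toReal_ofReal ha.le,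
      ENNReal.toReal_ofReal (by positivity)] at h2
    have h3 : ‖(1 - a) • p + a • z - x‖ ^ 2 = (1 - a) * ‖p - x‖ ^ 2 + a * ‖z - x‖ ^ 2
        - a * (1 - a) * ‖z - p‖ ^ 2 := by
      have e1 : (1 - a) • p + a • z - x = (p - x) + a • (z - p) := by module
      have e2 : z - x = (p - x) + (z - p) := by abel
      rw [e1, e2, norm_add_sq_real, norm_add_sq_real, inner_smul_right, norm_smul, mul_pow,
        Real.norm_eq_abs, sq_abs]
      ring
    rw [h3] at h2
    have : 0 ≤ a * (η * (ψ z).toReal + ‖z - x‖ ^ 2 / 2 - (η * (ψ p).toReal + ‖p - x‖ ^ 2 / 2 + (1 - a) * (‖z - p‖ ^ 2 / 2))) := by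
      linarith
    have := nonneg_of_mul_nonneg_right this ha
    linarith
  by_contra! hcon
  set Q := ‖z - p‖ ^ 2 / 2
  set A := η * (ψ p).toReal + ‖p - x‖ ^ 2 / 2
  set B := η * (ψ z).toReal + ‖z - x‖ ^ 2 / 2
  have hQ : 0 ≤ Q := by positivity
  have hAB : A + Q - B > 0 := by linarith
  have h1 := key (min (1/2) ((A + Q - B) / (2 * (Q + 1)))) (by positivity) 
    (lt_of_le_of_lt (min_le_left _ _) (by norm_num))
  have h2 : min (1/2) ((A + Q - B) / (2 * (Q + 1))) * Q ≤ (A + Q - B) / (2 * (Q + 1)) * (Q + 1) :=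
    mul_le_mul (min_le_right _ _) (by linarith) hQ (by positivity)
  have h3 : (A + Q - B) / (2 * (Q + 1)) * (Q + 1) = (A + Q - B) / 2 := by field_simp
  linarith

theorem aux_step [CompleteSpace E] (f : E → ℝ) (f' : E → E)
    (hf : ∀ x, HasGradientAt f (f' x) x) (L : ℝ)
    (hlip : ∀ x y, ‖f' x - f' y‖ ≤ L * ‖x - y‖)
    (ψ : E → ℝ≥0∞) (hc : ConvexFnENN ψ) (η : ℝ) (hη : 0 < η) (x d y z : E)
    (hp : IsProxPt ψ η (x - η • d) y) (hz : ψ z ≠ ⊤) :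
    f y + (ψ y).toReal ≤ f z + (ψ z).toReal + ⟪y - z, f' x - d⟫ + (L / 2 - 1 / (2 * η)) * ‖y - x‖ ^ 2
      + (L / 2 + 1 / (2 * η)) * ‖z - x‖ ^ 2 - 1 / (2 * η) * ‖y - z‖ ^ 2 := by
  have h1 := aux_descent f f' hf L hlip x y
  have h2 := aux_ascent f f' hf L hlip x z
  have h3 := (aux_prox ψ hc η hη _ _ z hp hz).2
  have e1 : y - (x - η • d) = (y - x) + η • d := by module
  have e2 : z - (x - η • d) = (z - x) + η • d := by module
  rw [e1, e2, norm_add_sq_real, norm_add_sq_real, inner_smul_right, inner_smul_right] at h3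
  have e3 : ⟪y - z, f' x - d⟫ = ⟪f' x, y - x⟫ - ⟪f' x, z - x⟫ - ⟪y - x, d⟫ + ⟪z - x, d⟫ := by
    simp only [inner_sub_left, inner_sub_right, real_inner_comm]; ring
  rw [norm_sub_rev z y] at h3
  have h4 : (ψ y).toReal ≤ (ψ z).toReal + ⟪z - x, d⟫ - ⟪y - x, d⟫ + 1 / (2 * η) * (‖z - x‖ ^ 2 - ‖y - x‖ ^ 2 - ‖y - z‖ ^ 2) := by
    have : (ψ z).toReal + ⟪z - x, d⟫ - ⟪y - x, d⟫ + 1 / (2 * η) * (‖z - x‖ ^ 2 - ‖y - x‖ ^ 2 - ‖y - z‖ ^ 2) - (ψ y).toReal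
      = 1 / η * (η * (ψ z).toReal + (‖z - x‖ ^ 2 + 2 * (η * ⟪z - x, d⟫) + ‖η • d‖ ^ 2) / 2 - 
        (η * (ψ y).toReal + (‖y - x‖ ^ 2 + 2 * (η * ⟪y - x, d⟫) + ‖η • d‖ ^ 2) / 2 + ‖y - z‖ ^ 2 / 2)) := by
      field_simp; ring
    have h5 : 0 ≤ 1 / η := by positivity
    have := mul_nonneg h5 (sub_nonneg.2 h3)
    linarith
  rw [e3]
  linarith

/-- one step descent -/
theorem aux_one [CompleteSpace E] (f : E → ℝ) (f' : E → E)
    (hf : ∀ x, HasGradientAt f (f' x) x) (L : ℝ)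
    (hlip : ∀ x y, ‖f' x - f' y‖ ≤ L * ‖x - y‖)
    (ψ : E → ℝ≥0∞) (hc : ConvexFnENN ψ) (η : ℝ) (hη : 0 < η) (x d : E) (prox : E → E)
    (hp : ∀ x, IsProxPt ψ η x (prox x)) (hx : ψ x ≠ ⊤) :
    f (prox (x - η • d)) + (ψ (prox (x - η • d))).toReal ≤ f x + (ψ x).toReal
      - η * (1 / 2 - η * L) * ‖gradMapping prox f' η x‖ ^ 2
      + (L / 2 - 1 / (2 * η)) * ‖prox (x - η • d) - x‖ ^ 2 + η / 2 * ‖f' x - d‖ ^ 2 := by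
  set y := prox (x - η • d)
  set z := prox (x - η • f' x) with hzdef
  have hz := (aux_prox ψ hc η hη _ _ x (hp (x - η • f' x)) hx).1
  have h1 := aux_step f f' hf L hlip ψ hc η hη x d y z (hp _) hz
  have h2 := aux_step f f' hf L hlip ψ hc η hη x (f' x) z x (hp _) hx
  simp only [sub_self, inner_zero_right, norm_zero] at h2
  have h3 : ⟪y - z, f' x - d⟫ ≤ 1 / (2 * η) * ‖y - z‖ ^ 2 + η / 2 * ‖f' x - d‖ ^ 2 := by
    have h5 := real_inner_le_norm (y - z) (f' x - d)
    have : 1 / (2 * η) * ‖y - z‖ ^ 2 + η / 2 * ‖f' x - d‖ ^ 2 - ‖y - z‖ * ‖f' x - d‖ = 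
      1 / (2 * η) * (‖y - z‖ - η * ‖f' x - d‖) ^ 2 := by field_simp; ring
    have : 0 ≤ 1 / (2 * η) * (‖y - z‖ - η * ‖f' x - d‖) ^ 2 := by positivity
    linarith
  have h4 : η * (1 / 2 - η * L) * ‖gradMapping prox f' η x‖ ^ 2 = (1 / (2 * η) - L) * ‖z - x‖ ^ 2 := by
    unfold gradMapping
    rw [norm_smul, ← hzdef, norm_sub_rev x z, mul_pow, Real.norm_eq_abs, sq_abs]
    field_simp
  rw [h4]
  linarith

theorem aux_count_s11 {n : ℕ} (b : ℕ) (hb : 1 ≤ b) :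
    ∃ N1 N2 : ℝ, (n : ℝ) * N1 = b * (n.choose b : ℝ) ∧ ((n : ℝ) - 1) * N2 = (b - 1) * N1 ∧
    ∀ i j : Fin n, (((Finset.univ.powersetCard b).filter
      (fun A : Finset (Fin n) => i ∈ A ∧ j ∈ A)).card : ℝ) = if i = j then N1 else N2 := by
  rcases n with _ | n
  · exact ⟨0, 0, by rw [Nat.choose_eq_zero_of_lt (by omega)]; simp, by simp, fun i => i.elim0⟩
  obtain ⟨b, rfl⟩ : ∃ c, b = c + 1 := ⟨b - 1, by omega⟩
  have hset : ∀ i j : Fin (n + 1), ((Finset.univ.powersetCard (b + 1)).filter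
      (fun A : Finset (Fin (n + 1)) => i ∈ A ∧ j ∈ A)) = ((Finset.univ.powersetCard (b + 1)).filter
      (fun A : Finset (Fin (n + 1)) => {i, j} ⊆ A)) := by
    intro i j
    apply Finset.filter_congr
    intro A _
    simp [Finset.insert_subset_iff]
  have h1 : ∀ i : Fin (n + 1), ((Finset.univ.powersetCard (b + 1)).filter
      (fun A : Finset (Fin (n + 1)) => i ∈ A ∧ i ∈ A)).card = n.choose b := by
    intro i
    rw [hset, Finset.card_filter_powersetCard_subset _ _ _ (Finset.subset_univ _) (by simp)]
    simp
  have h0 : ((n + 1 : ℕ) : ℝ) * (n.choose b : ℝ) = ((b + 1 : ℕ) : ℝ) * ((n + 1).choose (b + 1) : ℝ) := by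
    have := Nat.add_one_mul_choose_eq n b
    rw [mul_comm ((n+1).choose _)] at this
    exact_mod_cast this
  rcases b with _ | b
  · refine ⟨(n.choose 0 : ℝ), 0, h0, by simp, ?_⟩
    intro i j
    split_ifs with hij
    · subst hij; exact_mod_cast h1 i
    · rw [Nat.cast_eq_zero, Finset.card_eq_zero, Finset.filter_eq_empty_iff]
      rintro A hA ⟨hi, hj⟩
      have hA := (Finset.mem_powersetCard.1 hA).2
      exact hij (Finset.card_le_one.1 (by omega) i hi j hj)
  · refine ⟨(n.choose (b + 1) : ℝ), ((n - 1).choose b : ℝ), h0, ?_, ?_⟩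
    · rcases n with _ | n
      · simp
      · have := Nat.add_one_mul_choose_eq n b
        rw [mul_comm ((n+1).choose _)] at this
        have h : ((n + 1 : ℕ) : ℝ) * (n.choose b : ℝ) = ((b + 1 : ℕ) : ℝ) * ((n + 1).choose (b + 1) : ℝ) := by
          exact_mod_cast this
        push_cast at h ⊢
        simp only [add_tsub_cancel_right]
        linarith
    · intro i j
      split_ifs with hij
      · subst hij; exact_mod_cast h1 i
      · rw [hset, Finset.card_filter_powersetCard_subset _ _ _ (Finset.subset_univ _)
          (by rw [Finset.card_pair hij]; omega), Finset.card_pair hij]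
        simp

theorem aux_var0 {n : ℕ} (b : ℕ) (c : Fin n → E) (hc : ∑ j, c j = 0) (N1 N2 : ℝ)
    (hN : ∀ i j : Fin n, (((Finset.univ.powersetCard b).filter
      (fun A : Finset (Fin n) => i ∈ A ∧ j ∈ A)).card : ℝ) = if i = j then N1 else N2) :
    ∑ A ∈ Finset.univ.powersetCard b, ‖∑ j ∈ A, c j‖ ^ 2 = (N1 - N2) * ∑ j, ‖c j‖ ^ 2 := by
  have h1 : ∀ A : Finset (Fin n), ‖∑ j ∈ A, c j‖ ^ 2 =
      ∑ i, ∑ j, if i ∈ A ∧ j ∈ A then ⟪c i, c j⟫ else 0 := by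
    intro A
    rw [← real_inner_self_eq_norm_sq, sum_inner]
    simp only [inner_sum, ite_and]
    rw [← Finset.sum_subset (Finset.subset_univ A)]
    · refine Finset.sum_congr rfl fun i hi => ?_
      simp [hi]
    · intro i _ hi
      simp [hi]
  simp only [h1]
  rw [Finset.sum_comm]
  have h2 : ∀ i, ∑ A ∈ Finset.univ.powersetCard b, ∑ j, (if i ∈ A ∧ j ∈ A then ⟪c i, c j⟫ else 0)
      = (N1 - N2) * ‖c i‖ ^ 2 := by
    intro i
    rw [Finset.sum_comm]
    have h3 : ∀ j, ∑ A ∈ Finset.univ.powersetCard b, (if i ∈ A ∧ j ∈ A then ⟪c i, c j⟫ else 0)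
        = (if i = j then (N1 - N2) * ⟪c i, c j⟫ else 0) + N2 * ⟪c i, c j⟫ := by
      intro j
      rw [← Finset.sum_filter, Finset.sum_const, nsmul_eq_mul, hN]
      split_ifs <;> ring
    simp only [h3]
    rw [Finset.sum_add_distrib, ← Finset.mul_sum, ← inner_sum, hc]
    simp
  simp only [h2, Finset.mul_sum]

theorem aux_var_s11 {n : ℕ} (hn : 2 ≤ n) (b : ℕ) (hb : 1 ≤ b) (hbn : b ≤ n) (a : Fin n → E) :
    ∑ A : {A : Finset (Fin n) // A.card = b}, ‖(1 / b : ℝ) • ∑ j ∈ A.1, a j - (1 / n : ℝ) • ∑ j, a j‖ ^ 2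
    ≤ (Fintype.card {A : Finset (Fin n) // A.card = b} : ℝ) * ((n - b) / (b * (n - 1)) : ℝ) * ((1 / n : ℝ) * ∑ j, ‖a j‖ ^ 2) := by
  have hn0 : (2 : ℝ) ≤ n := by exact_mod_cast hn
  have hb0 : (1 : ℝ) ≤ b := by exact_mod_cast hb
  have hbn0 : (b : ℝ) ≤ n := by exact_mod_cast hbn
  obtain ⟨N1, N2, e1, e2, hN⟩ := aux_count_s11 (n := n) b hb
  set abar := (1 / n : ℝ) • ∑ j, a j with habar
  have hsum : ∑ j, (a j - abar) = 0 := by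
    rw [Finset.sum_sub_distrib, Finset.sum_const, Finset.card_univ, Fintype.card_fin,
      ← Nat.cast_smul_eq_nsmul ℝ, habar, smul_smul, mul_one_div_cancel (by positivity), one_smul,
      sub_self]
  have hv := aux_var0 b (fun j => a j - abar) hsum N1 N2 hN
  have hcard : (Fintype.card {A : Finset (Fin n) // A.card = b}) = n.choose b := by
    simp
  rw [hcard]
  have hsub := Finset.sum_subtype (Finset.univ.powersetCard b) (p := fun A : Finset (Fin n) => A.card = b) (F := inferInstance)
    (by simp) (fun A => ‖(1 / b : ℝ) • ∑ j ∈ A, a j - abar‖ ^ 2)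
  rw [← hsub]
  have h3 : ∀ A ∈ (Finset.univ : Finset (Fin n)).powersetCard b,
      ‖(1 / b : ℝ) • ∑ j ∈ A, a j - abar‖ ^ 2 = (1 / b : ℝ) ^ 2 * ‖∑ j ∈ A, (a j - abar)‖ ^ 2 := by
    intro A hA
    have hA := (Finset.mem_powersetCard.1 hA).2
    have : (1 / b : ℝ) • ∑ j ∈ A, a j - abar = (1 / b : ℝ) • ∑ j ∈ A, (a j - abar) := by
      rw [Finset.sum_sub_distrib, Finset.sum_const, hA, ← Nat.cast_smul_eq_nsmul ℝ, smul_sub,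
        smul_smul, one_div_mul_cancel (by positivity), one_smul]
    rw [this, norm_smul, mul_pow, Real.norm_eq_abs, sq_abs]
  rw [Finset.sum_congr rfl h3, ← Finset.mul_sum, hv]
  have h4 : ∑ j, ‖a j - abar‖ ^ 2 ≤ ∑ j, ‖a j‖ ^ 2 := by
    have h5 : ∑ j, ‖a j‖ ^ 2 = ∑ j, ‖a j - abar‖ ^ 2 + 2 * ⟪∑ j, (a j - abar), abar⟫ + ∑ j : Fin n, ‖abar‖ ^ 2 := by
      rw [sum_inner, Finset.mul_sum, ← Finset.sum_add_distrib, ← Finset.sum_add_distrib]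
      refine Finset.sum_congr rfl fun j _ => ?_
      rw [← norm_add_sq_real, sub_add_cancel]
    rw [hsum, inner_zero_left] at h5
    have : 0 ≤ ∑ j : Fin n, ‖abar‖ ^ 2 := by positivity
    linarith
  have h6 : (1 / b : ℝ) ^ 2 * (N1 - N2) = (n.choose b : ℝ) * ((n - b) / (b * (n - 1)) : ℝ) * (1 / n : ℝ) := by
    have hn1 : (n : ℝ) - 1 ≠ 0 := by linarith
    have E1 : N1 = b * (n.choose b : ℝ) / n := by field_simp; linarith
    have E2 : N2 = (b - 1) * N1 / (n - 1) := by field_simp; linarith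
    rw [E2, E1]
    field_simp
    ring
  rw [← mul_assoc, h6, ← mul_assoc]
  have : 0 ≤ ((n : ℝ) - b) / (b * (n - 1)) := div_nonneg (by linarith) (mul_nonneg (by linarith) (by linarith))
  gcongr

theorem aux_grad [CompleteSpace E] {n : ℕ} (g : Fin n → E → ℝ) (hg : ∀ i, Differentiable ℝ (g i)) (x : E) :
    HasGradientAt (avgFn g) ((1 / n : ℝ) • ∑ i, gradient (g i) x) x := by
  rw [hasGradientAt_iff_hasFDerivAt]
  have h : ∀ i, HasFDerivAt (g i) (InnerProductSpace.toDual ℝ E (gradient (g i) x)) x := fun i =>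
    hasGradientAt_iff_hasFDerivAt.1 ((hg i x).hasGradientAt)
  have h2 := (HasFDerivAt.fun_sum (u := Finset.univ) (fun i _ => h i)).const_mul (1 / n : ℝ)
  convert! h2 using 1
  simp [map_sum]

theorem aux_path {E : Type*} [NormedAddCommGroup E] (m : ℕ) (w : ℕ → E) :
    ∑ t ∈ Finset.range m, ‖w t - w 0‖ ^ 2 ≤ m ^ 2 * ∑ t ∈ Finset.range m, ‖w (t + 1) - w t‖ ^ 2 := by
  have h : ∀ t ∈ Finset.range m, ‖w t - w 0‖ ^ 2 ≤ m * ∑ t ∈ Finset.range m, ‖w (t + 1) - w t‖ ^ 2 := by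
    intro t ht
    have ht := Finset.mem_range.1 ht
    rw [← Finset.sum_range_sub]
    calc ‖∑ i ∈ Finset.range t, (w (i + 1) - w i)‖ ^ 2 
        ≤ (∑ i ∈ Finset.range t, ‖w (i + 1) - w i‖) ^ 2 := by
          gcongr; exact norm_sum_le _ _
      _ ≤ (Finset.range t).card * ∑ i ∈ Finset.range t, ‖w (i + 1) - w i‖ ^ 2 := sq_sum_le_card_mul_sum_sq
      _ ≤ _ := by
          rw [Finset.card_range]
          have : (t : ℝ) ≤ m := by exact_mod_cast ht.le
          have h2 : ∑ i ∈ Finset.range t, ‖w (i + 1) - w i‖ ^ 2 ≤ ∑ i ∈ Finset.range m, ‖w (i + 1) - w i‖ ^ 2 :=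
            Finset.sum_le_sum_of_subset_of_nonneg (Finset.range_subset_range.2 ht.le) (fun _ _ _ => by positivity)
          gcongr
  refine (Finset.sum_le_sum h).trans ?_
  simp
  apply le_of_eq; ring

theorem aux_split {ι β : Type*} [Fintype ι] [DecidableEq ι] [Fintype β] (p : ι) (Φ Ψ : (ι → β) → ℝ)
   (h : ∀ ω, ∑ A, Φ (Function.update ω p A) ≤ ∑ A, Ψ (Function.update ω p A)) :
   ∑ ω, Φ ω ≤ ∑ ω, Ψ ω := by
  have key : ∀ Φ : (ι → β) → ℝ, ∑ ω, ∑ A, Φ (Function.update ω p A) = Fintype.card β * ∑ ω, Φ ω := by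
    intro Φ
    rw [← Fintype.sum_prod_type']
    have : ∑ x : (ι → β) × β, Φ (Function.update x.1 p x.2) = ∑ x : (ι → β) × β, Φ x.1 := by
      refine Finset.sum_bij' (fun x _ => (Function.update x.1 p x.2, x.1 p)) (fun x _ => (Function.update x.1 p x.2, x.1 p)) ?_ ?_ ?_ ?_ ?_ <;> simp
    rw [this, Fintype.sum_prod_type]
    simp [Finset.mul_sum]
  have h1 := Finset.sum_le_sum (fun ω (_ : ω ∈ Finset.univ) => h ω)
  rw [key, key] at h1
  by_cases hβ : Fintype.card β = 0
  · have : IsEmpty β := Fintype.card_eq_zero_iff.1 hβ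
    have : IsEmpty (ι → β) := ⟨fun f => this.false (f p)⟩
    simp
  · exact le_of_mul_le_mul_left h1 (by positivity)

end Aux

/-- Main convergence theorem, Theorem 1 of the paper. With
`η = 1/(θL)`, `θ > 2` and `θ(θ−1) ≥ 2m(m+1)α(n,b)`, the variance-reduced iterates
satisfy `(1/(mS)) ∑_{s,t} E‖Γ_{f′,η}(W^{s,t})‖² ≤ (f′(W^{0,0}) − f*)/(η(1/2 − ηL) m S)`;
equivalently this bounds `E‖Γ_{f′,η}(W_final)‖²` for `W_final` drawn uniformly from the
iterates. Expectations are uniform averages over the product batch space. -/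
theorem smf_vr_main_convergence {d k n : ℕ} (hn : 2 ≤ n)
    (m S b : ℕ) (hm : 1 ≤ m) (hS : 1 ≤ S) (hb : 1 ≤ b) (hbn : b ≤ n)
    (θ L η : ℝ) (hθ : 2 < θ) (hL : 0 < L) (hη : η = 1 / (θ * L))
    (hcond : 2 * m * (m + 1) * ((n - b) / (b * (n - 1)) : ℝ) ≤ θ * (θ - 1))
    (g : Fin n → Mat d k → ℝ)
    (hgdiff : ∀ i, Differentiable ℝ (g i))
    (hglip : ∀ i, ∀ x y : Mat d k, ‖gradient (g i) x - gradient (g i) y‖ ≤ L * ‖x - y‖)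
    (ψ' : Mat d k → ℝ≥0∞) (hψconv : ConvexFnENN ψ') (hψproper : ∃ x, ψ' x ≠ ⊤)
    (hψclosed : LowerSemicontinuous ψ')
    -- `f* = min f′` is attained and finite
    (fstar : ℝ)
    (hfstar : ∃ xm : Mat d k,
        ((avgFn g xm : ℝ) : EReal) + (ψ' xm : EReal) = ((fstar : ℝ) : EReal) ∧
        ∀ x : Mat d k, ((fstar : ℝ) : EReal) ≤ ((avgFn g x : ℝ) : EReal) + (ψ' x : EReal))
    -- the proximal map of `ηψ′`
    (prox : Mat d k → Mat d k) (hprox : ∀ x, IsProxPt ψ' η x (prox x))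
    -- the deterministic initial dictionary, in the domain of `ψ′`
    (W00 : Mat d k) (hW00 : ψ' W00 ≠ ⊤)
    -- the random iterates
    (W : ℕ → ℕ → BatchSpace n S m b → Mat d k)
    (hinit : ∀ ω, W 0 0 ω = W00)
    (houter : ∀ (s : ℕ) (ω : BatchSpace n S m b), W (s + 1) 0 ω = W s m ω)
    (hinner : ∀ (s : Fin S) (t : Fin m) (ω : BatchSpace n S m b),
      W s ((t : ℕ) + 1) ω = prox (W s t ω - η •
        ((1 / b : ℝ) • ∑ j ∈ (ω (s, t)).1,
            (gradient (g j) (W s t ω) - gradient (g j) (W s 0 ω))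
          + gradient (avgFn g) (W s 0 ω)))) :
    (1 / (m * S) : ℝ) * ∑ s : Fin S, ∑ t : Fin m,
        ((∑ ω : BatchSpace n S m b,
            ‖gradMapping prox (gradient (avgFn g)) η (W s t ω)‖ ^ 2)
          / (Fintype.card (BatchSpace n S m b) : ℝ))
      ≤ (avgFn g W00 + (ψ' W00).toReal - fstar) / (η * (1 / 2 - η * L) * (m * S)) := by
  classical
  have hθ0 : 0 < θ := by linarith
  have hη0 : 0 < η := by rw [hη]; positivity
  have hn0 : (2 : ℝ) ≤ n := by exact_mod_cast hn
  have hm0 : (1 : ℝ) ≤ m := by exact_mod_cast hm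
  have hS0 : (1 : ℝ) ≤ S := by exact_mod_cast hS
  have hb0 : (1 : ℝ) ≤ b := by exact_mod_cast hb
  have hbn0 : (b : ℝ) ≤ n := by exact_mod_cast hbn
  have hηL : η * L = 1 / θ := by rw [hη]; field_simp
  have hc0 : 0 < 1 / 2 - η * L := by
    rw [hηL, sub_pos]; exact one_div_lt_one_div_of_lt (by norm_num) hθ
  set α : ℝ := ((n - b) / (b * (n - 1)) : ℝ) with hα
  have hα0 : 0 ≤ α := div_nonneg (by linarith) (mul_nonneg (by linarith) (by linarith))
  -- gradient of the average
  have hgr : ∀ x, gradient (avgFn g) x = (1 / n : ℝ) • ∑ i, gradient (g i) x :=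
    fun x => (aux_grad g hgdiff x).gradient
  have hgrad : ∀ x, HasGradientAt (avgFn g) (gradient (avgFn g) x) x := by
    intro x; rw [hgr]; exact aux_grad g hgdiff x
  have hlip : ∀ x y, ‖gradient (avgFn g) x - gradient (avgFn g) y‖ ≤ L * ‖x - y‖ := by
    intro x y
    rw [hgr, hgr, ← smul_sub, ← Finset.sum_sub_distrib, norm_smul, Real.norm_of_nonneg (by positivity)]
    calc (1 / n : ℝ) * ‖∑ i, (gradient (g i) x - gradient (g i) y)‖
        ≤ (1 / n : ℝ) * ∑ i : Fin n, L * ‖x - y‖ := by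
          gcongr
          exact norm_sum_le_of_le _ (fun i _ => hglip i x y)
      _ = L * ‖x - y‖ := by
          rw [Finset.sum_const, Finset.card_univ, Fintype.card_fin, nsmul_eq_mul]
          field_simp
  -- finiteness
  have hpf : ∀ x, ψ' (prox x) ≠ ⊤ := fun x =>
    (aux_prox ψ' hψconv η hη0 x (prox x) W00 (hprox x) hW00).1
  have hfin1 : ∀ s t ω, s < S → t < m → ψ' (W s (t + 1) ω) ≠ ⊤ := by
    intro s t ω hs ht
    have := hinner ⟨s, hs⟩ ⟨t, ht⟩ ω
    simp only at this
    rw [this]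
    exact hpf _
  have hfin0 : ∀ s ω, s ≤ S → ψ' (W s 0 ω) ≠ ⊤ := by
    intro s ω hs
    rcases s with _ | s
    · rw [hinit]; exact hW00
    · rw [houter]
      obtain ⟨m', rfl⟩ : ∃ c, m = c + 1 := ⟨m - 1, by omega⟩
      exact hfin1 s m' ω (by omega) (by omega)
  have hfin : ∀ s t ω, s < S → t ≤ m → ψ' (W s t ω) ≠ ⊤ := by
    intro s t ω hs ht
    rcases t with _ | t
    · exact hfin0 s ω hs.le
    · exact hfin1 s t ω hs (by omega)
  -- adaptedness
  have hinv1 : ∀ (p : Fin S × Fin m) (A : {A : Finset (Fin n) // A.card = b})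
      (ω : BatchSpace n S m b) (s : ℕ), s ≤ p.1.1 → W s 0 (Function.update ω p A) = W s 0 ω →
      ∀ t : ℕ, t ≤ m → (s = p.1.1 → t ≤ p.2.1) →
        W s t (Function.update ω p A) = W s t ω := by
    intro p A ω s hs h0 t
    induction t with
    | zero => intro _ _; exact h0
    | succ t ih =>
      intro ht hst
      have iht := ih (by omega) (fun h => by have := hst h; omega)
      have hs' : s < S := lt_of_le_of_lt hs p.1.2
      have e1 := hinner ⟨s, hs'⟩ ⟨t, by omega⟩ ω
      have e2 := hinner ⟨s, hs'⟩ ⟨t, by omega⟩ (Function.update ω p A)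
      have hne : ((⟨s, hs'⟩, ⟨t, by omega⟩) : Fin S × Fin m) ≠ p := by
        intro h
        have h1 : s = p.1.1 := by rw [← h]
        have h2 : t = p.2.1 := by rw [← h]
        have := hst h1
        omega
      rw [Function.update_of_ne hne] at e2
      simp only at e1 e2
      rw [e1, e2, iht, h0]
  have hinv0 : ∀ (p : Fin S × Fin m) (A : {A : Finset (Fin n) // A.card = b})
      (ω : BatchSpace n S m b) (s : ℕ), s ≤ p.1.1 →
      W s 0 (Function.update ω p A) = W s 0 ω := by
    intro p A ω s
    induction s with
    | zero => intro _; rw [hinit, hinit]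
    | succ s ih =>
      intro hs
      rw [houter, houter]
      exact hinv1 p A ω s (by omega) (ih (by omega)) m le_rfl (by omega)
  -- variance bound
  have hvar : ∀ (s : Fin S) (t : Fin m),
      ∑ ω : BatchSpace n S m b, ‖gradient (avgFn g) (W s t ω) - ((1 / b : ℝ) • ∑ j ∈ (ω (s, t)).1,
            (gradient (g j) (W s t ω) - gradient (g j) (W s 0 ω))
          + gradient (avgFn g) (W s 0 ω))‖ ^ 2
      ≤ ∑ ω : BatchSpace n S m b, α * L ^ 2 * ‖W s t ω - W s 0 ω‖ ^ 2 := by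
    intro s t
    apply aux_split (s, t)
    intro ω
    have i0 : ∀ A, W s 0 (Function.update ω (s, t) A) = W s 0 ω := fun A =>
      hinv0 (s, t) A ω s le_rfl
    have i1 : ∀ A, W s t (Function.update ω (s, t) A) = W s t ω := fun A =>
      hinv1 (s, t) A ω s le_rfl (i0 A) t t.2.le (fun _ => le_rfl)
    simp only [i0, i1, Function.update_self]
    have hv := aux_var_s11 hn b hb hbn
      (fun j => gradient (g j) (W s t ω) - gradient (g j) (W s 0 ω))
    have heq : ∀ A : {A : Finset (Fin n) // A.card = b},
        ‖gradient (avgFn g) (W s t ω) - ((1 / b : ℝ) • ∑ j ∈ A.1,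
            (gradient (g j) (W s t ω) - gradient (g j) (W s 0 ω))
          + gradient (avgFn g) (W s 0 ω))‖ ^ 2 =
        ‖(1 / b : ℝ) • ∑ j ∈ A.1, (gradient (g j) (W s t ω) - gradient (g j) (W s 0 ω))
          - (1 / n : ℝ) • ∑ j, (gradient (g j) (W s t ω) - gradient (g j) (W s 0 ω))‖ ^ 2 := by
      intro A
      rw [norm_sub_rev, Finset.sum_sub_distrib (s := Finset.univ), smul_sub, ← hgr, ← hgr]
      congr 2
      abel
    simp only [heq]
    refine hv.trans ?_
    rw [Finset.sum_const, Finset.card_univ, nsmul_eq_mul, mul_assoc, ← hα, mul_assoc α]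
    refine mul_le_mul_of_nonneg_left (mul_le_mul_of_nonneg_left ?_ hα0) (by positivity)
    calc (1 / n : ℝ) * ∑ j, ‖gradient (g j) (W s t ω) - gradient (g j) (W s 0 ω)‖ ^ 2
        ≤ (1 / n : ℝ) * ∑ j : Fin n, (L * ‖W s t ω - W s 0 ω‖) ^ 2 := by
          gcongr with j _
          exact hglip j _ _
      _ = L ^ 2 * ‖W s t ω - W s 0 ω‖ ^ 2 := by
          rw [Finset.sum_const, Finset.card_univ, Fintype.card_fin, nsmul_eq_mul]
          field_simp
  -- one step
  set e : ℕ → ℕ → ℝ := fun s t => ∑ ω : BatchSpace n S m b,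
    (avgFn g (W s t ω) + (ψ' (W s t ω)).toReal) with he
  set G : ℕ → ℕ → ℝ := fun s t => ∑ ω : BatchSpace n S m b,
    ‖gradMapping prox (gradient (avgFn g)) η (W s t ω)‖ ^ 2 with hG
  set D : ℕ → ℕ → ℝ := fun s t => ∑ ω : BatchSpace n S m b, ‖W s (t + 1) ω - W s t ω‖ ^ 2 with hD
  set Q : ℕ → ℕ → ℝ := fun s t => ∑ ω : BatchSpace n S m b, ‖W s t ω - W s 0 ω‖ ^ 2 with hQ
  have hstep : ∀ s t, s < S → t < m → e s (t + 1) - e s t ≤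
      (L / 2 - 1 / (2 * η)) * D s t + η / 2 * (α * L ^ 2) * Q s t - η * (1 / 2 - η * L) * G s t := by
    intro s t hs ht
    have hv := hvar ⟨s, hs⟩ ⟨t, ht⟩
    have hone := Finset.sum_le_sum (fun ω (_ : ω ∈ (Finset.univ : Finset (BatchSpace n S m b))) =>
      aux_one (avgFn g) (gradient (avgFn g)) hgrad L hlip ψ' hψconv η hη0 (W s t ω)
       ((1 / b : ℝ) • ∑ j ∈ (ω (⟨s, hs⟩, ⟨t, ht⟩)).1,
            (gradient (g j) (W s t ω) - gradient (g j) (W s 0 ω))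
          + gradient (avgFn g) (W s 0 ω)) prox hprox (hfin s t ω hs ht.le))
    have hin : ∀ ω : BatchSpace n S m b, prox (W s t ω - η •
        ((1 / b : ℝ) • ∑ j ∈ (ω (⟨s, hs⟩, ⟨t, ht⟩)).1,
            (gradient (g j) (W s t ω) - gradient (g j) (W s 0 ω))
          + gradient (avgFn g) (W s 0 ω))) = W s (t + 1) ω :=
      fun ω => (hinner ⟨s, hs⟩ ⟨t, ht⟩ ω).symm
    simp only [hin] at hone
    simp only [← Finset.mul_sum] at hv
    rw [Finset.sum_add_distrib (g := fun ω => η / 2 * _), Finset.sum_add_distrib (g := fun ω => (L / 2 - 1 / (2 * η)) * _),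
      Finset.sum_sub_distrib, ← Finset.mul_sum, ← Finset.mul_sum, ← Finset.mul_sum] at hone
    have := mul_le_mul_of_nonneg_left hv (by positivity : 0 ≤ η / 2)
    simp only [he, hG, hD, hQ]
    linarith
  have hDQ : ∀ s, ∑ t ∈ Finset.range m, Q s t ≤ m ^ 2 * ∑ t ∈ Finset.range m, D s t := by
    intro s
    simp only [hQ, hD]
    rw [Finset.sum_comm, Finset.sum_comm (s := Finset.range m), Finset.mul_sum]
    exact Finset.sum_le_sum fun ω _ => aux_path m (fun t => W s t ω)
  have hcoef : L / 2 - 1 / (2 * η) + η / 2 * (α * L ^ 2) * m ^ 2 ≤ 0 := by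
    have h1 : L / 2 - 1 / (2 * η) + η / 2 * (α * L ^ 2) * m ^ 2
        = L / (2 * θ) * (α * m ^ 2 - θ * (θ - 1)) := by
      rw [hη]; field_simp; ring
    rw [h1]
    apply mul_nonpos_of_nonneg_of_nonpos (by positivity)
    have : 0 ≤ m * α := by positivity
    have : 0 ≤ m * m * α := by positivity
    nlinarith
  have hepoch : ∀ s, s < S → e (s + 1) 0 - e s 0 ≤
      - (η * (1 / 2 - η * L) * ∑ t ∈ Finset.range m, G s t) := by
    intro s hs
    have h1 := Finset.sum_le_sum (fun t ht => hstep s t hs (Finset.mem_range.1 ht))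
    rw [Finset.sum_range_sub, Finset.sum_sub_distrib, Finset.sum_add_distrib, ← Finset.mul_sum,
      ← Finset.mul_sum, ← Finset.mul_sum] at h1
    have h2 : e (s + 1) 0 = e s m := by simp only [he, houter]
    have h3 : 0 ≤ ∑ t ∈ Finset.range m, D s t :=
      Finset.sum_nonneg fun t _ => Finset.sum_nonneg fun ω _ => by positivity
    have h4 := mul_le_mul_of_nonneg_left (hDQ s) (by positivity : 0 ≤ η / 2 * (α * L ^ 2))
    have h5 := mul_nonneg (neg_nonneg.2 hcoef) h3
    rw [h2]
    nlinarith
  have htotal : e S 0 - e 0 0 ≤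
      - (η * (1 / 2 - η * L) * ∑ s ∈ Finset.range S, ∑ t ∈ Finset.range m, G s t) := by
    have h1 := Finset.sum_le_sum (fun s hs => hepoch s (Finset.mem_range.1 hs))
    rw [Finset.sum_range_sub (fun s => e s 0), Finset.sum_neg_distrib, ← Finset.mul_sum] at h1
    exact h1
  have hCpos : 0 < (Fintype.card (BatchSpace n S m b) : ℝ) := by
    have : Nonempty {A : Finset (Fin n) // A.card = b} := by
      obtain ⟨A, _, hA⟩ := Finset.exists_subset_card_eq (s := (Finset.univ : Finset (Fin n))) (n := b) (by simpa using hbn)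
      exact ⟨⟨A, hA⟩⟩
    exact_mod_cast Fintype.card_pos
  set C : ℝ := (Fintype.card (BatchSpace n S m b) : ℝ) with hC
  have he0 : e 0 0 = C * (avgFn g W00 + (ψ' W00).toReal) := by
    simp only [he, hinit]
    rw [Finset.sum_const, Finset.card_univ, nsmul_eq_mul]
  have heS : C * fstar ≤ e S 0 := by
    have : ∑ ω : BatchSpace n S m b, fstar ≤ e S 0 := by
      refine Finset.sum_le_sum fun ω _ => ?_
      obtain ⟨xm, _, hmin⟩ := hfstar
      have h1 := hmin (W S 0 ω)
      have h2 := hfin0 S ω le_rfl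
      rw [← EReal.coe_toReal (x := (ψ' (W S 0 ω) : EReal)) (by simpa using h2) (by simp)] at h1
      rw [EReal.toReal_coe_ennreal] at h1
      exact_mod_cast h1
    rwa [Finset.sum_const, Finset.card_univ, nsmul_eq_mul] at this
  have hsumeq : ∑ s : Fin S, ∑ t : Fin m, (G s t / C) =
      (∑ s ∈ Finset.range S, ∑ t ∈ Finset.range m, G s t) / C := by
    simp only [Finset.sum_range, Finset.sum_div]
  change (1 / (m * S) : ℝ) * ∑ s : Fin S, ∑ t : Fin m, (G s t / C) ≤ _
  rw [hsumeq]
  set T := ∑ s ∈ Finset.range S, ∑ t ∈ Finset.range m, G s t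
  have hfinal : η * (1 / 2 - η * L) * T ≤ C * (avgFn g W00 + (ψ' W00).toReal - fstar) := by
    linarith
  set c := η * (1 / 2 - η * L)
  have hcpos : 0 < c := by positivity
  have hmS : 0 < (m : ℝ) * S := by positivity
  rw [le_div_iff₀ (by positivity)]
  have : 1 / (m * S : ℝ) * (T / C) * (c * (m * S)) = c * T / C := by field_simp
  rw [this, div_le_iff₀ hCpos]
  linarith
end
end

section
/- (Iteration complexity for ε-stationarity.) In the setting and under the hypotheses of the main convergence theorem (η = 1/(θL), θ > 2, θ(θ−1) ≥ 2m(m+1)α(n,b)), for any ε > 0, if the total number of inner iterations satisfies mS ≥ ( f′(W^{0,0}) − f* ) / ( η (1/2 − ηL) ε ), then the output W_final chosen uniformly at random from {W^{s,t}}_{0≤s<S, 0≤t<m} is an ε-stationary point in expectation, i.e., E[ ‖Γ_{f′,η}(W_final)‖² ] ≤ ε. -/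
open scoped RealInnerProductSpace ENNReal

noncomputable section

section helpers

set_option linter.unusedSectionVars false

variable {E : Type*} [NormedAddCommGroup E] [InnerProductSpace ℝ E]

theorem descent_upper [CompleteSpace E] (f : E → ℝ) (G : E → E) (L : ℝ)
    (hf : ∀ x, HasGradientAt f (G x) x) (hG : ∀ x y, ‖G x - G y‖ ≤ L * ‖x - y‖) (x y : E) :
    f y ≤ f x + inner ℝ (G x) (y - x) + L / 2 * ‖y - x‖ ^ 2 := by
  set d := y - x with hd
  let φ : ℝ → ℝ := fun t => f (x + t • d) - t * inner ℝ (G x) d - L / 2 * t ^ 2 * ‖d‖ ^ 2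
  have hder : ∀ t : ℝ, HasDerivAt φ
      (inner ℝ (G (x + t • d)) d - inner ℝ (G x) d - L * t * ‖d‖ ^ 2) t := by
    intro t
    have h1 : HasDerivAt (fun t : ℝ => x + t • d) d t := by
      simpa using ((hasDerivAt_id t).smul_const d).const_add x
    have h2 := (hf (x + t • d)).hasFDerivAt.comp_hasDerivAt t h1
    have h3 : HasDerivAt (fun t : ℝ => t * inner ℝ (G x) d) (inner ℝ (G x) d) t := by
      simpa using (hasDerivAt_id t).mul_const (inner ℝ (G x) d)
    have h4 : HasDerivAt (fun t : ℝ => L / 2 * t ^ 2 * ‖d‖ ^ 2) (L * t * ‖d‖ ^ 2) t := by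
      have := (((hasDerivAt_id t).pow 2).const_mul (L / 2)).mul_const (‖d‖ ^ 2)
      refine this.congr_deriv ?_
      simp only [id, Nat.cast_ofNat]
      ring
    have h5 := (h2.sub h3).sub h4
    refine h5.congr_deriv ?_
    simp
  have hanti : AntitoneOn φ (Set.Icc 0 1) := by
    apply antitoneOn_of_deriv_nonpos (convex_Icc 0 1)
    · exact fun t _ => (hder t).continuousAt.continuousWithinAt
    · exact fun t _ => (hder t).differentiableAt.differentiableWithinAt
    · intro t ht
      rw [interior_Icc] at ht
      rw [(hder t).deriv, ← inner_sub_left]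
      have h1 := real_inner_le_norm (G (x + t • d) - G x) d
      have h2 := hG (x + t • d) x
      have h3 : ‖x + t • d - x‖ = t * ‖d‖ := by
        rw [add_sub_cancel_left, norm_smul, Real.norm_of_nonneg ht.1.le]
      rw [h3] at h2
      have h4 := mul_le_mul_of_nonneg_right h2 (norm_nonneg d)
      nlinarith
  have := hanti (Set.left_mem_Icc.2 zero_le_one) (Set.right_mem_Icc.2 zero_le_one) zero_le_one
  simp only [φ] at this
  have hxy : x + (1:ℝ) • d = y := by simp [hd]
  rw [hxy] at this
  simp at this
  linarith

theorem descent_lower [CompleteSpace E] (f : E → ℝ) (G : E → E) (L : ℝ)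
    (hf : ∀ x, HasGradientAt f (G x) x) (hG : ∀ x y, ‖G x - G y‖ ≤ L * ‖x - y‖) (x y : E) :
    f x + inner ℝ (G x) (y - x) ≤ f y + L / 2 * ‖y - x‖ ^ 2 := by
  have := descent_upper (fun x => - f x) (fun x => - G x) L
    (fun x => by
      have h := (hf x).hasFDerivAt.neg
      rw [hasGradientAt_iff_hasFDerivAt]
      rw [map_neg]
      exact h)
    (fun x y => by
      have := hG x y
      rwa [← norm_neg, show -(-G x - -G y) = G x - G y by abel]) x y
  simp only [inner_neg_left] at this
  linarith

theorem prox_finite {γ : E → ℝ≥0∞} {η : ℝ} (hη : 0 < η) (hp : ∃ x, γ x ≠ ⊤) {x p : E}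
    (h : IsProxPt γ η x p) : γ p ≠ ⊤ := by
  obtain ⟨u, hu⟩ := hp
  intro hpt
  have := h u
  rw [hpt, ENNReal.mul_top (by simpa using hη), top_add, top_le_iff] at this
  exact ENNReal.add_ne_top.2 ⟨ENNReal.mul_ne_top ENNReal.ofReal_ne_top hu, ENNReal.ofReal_ne_top⟩ this

theorem prox_real {γ : E → ℝ≥0∞} {η : ℝ} (hη : 0 < η) {x p u : E}
    (h : IsProxPt γ η x p) (hp : γ p ≠ ⊤) (hu : γ u ≠ ⊤) :
    η * (γ p).toReal + ‖p - x‖ ^ 2 / 2 ≤ η * (γ u).toReal + ‖u - x‖ ^ 2 / 2 := by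
  have h1 := h u
  have h2 := ENNReal.toReal_mono (ENNReal.add_ne_top.2
    ⟨ENNReal.mul_ne_top ENNReal.ofReal_ne_top hu, ENNReal.ofReal_ne_top⟩) h1
  rw [ENNReal.toReal_add (ENNReal.mul_ne_top ENNReal.ofReal_ne_top hp) ENNReal.ofReal_ne_top,
    ENNReal.toReal_add (ENNReal.mul_ne_top ENNReal.ofReal_ne_top hu) ENNReal.ofReal_ne_top,
    ENNReal.toReal_mul, ENNReal.toReal_mul, ENNReal.toReal_ofReal hη.le,
    ENNReal.toReal_ofReal (by positivity), ENNReal.toReal_ofReal (by positivity)] at h2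
  exact h2

theorem conv_real {γ : E → ℝ≥0∞} (hc : ConvexFnENN γ) {x y : E} (hx : γ x ≠ ⊤) (hy : γ y ≠ ⊤)
    {a b : ℝ} (ha : 0 ≤ a) (hb : 0 ≤ b) (hab : a + b = 1) :
    γ (a • x + b • y) ≠ ⊤ ∧
    (γ (a • x + b • y)).toReal ≤ a * (γ x).toReal + b * (γ y).toReal := by
  have h1 := hc x y a b ha hb hab
  have hX := ENNReal.mul_ne_top (ENNReal.ofReal_ne_top (r := a)) hx
  have hY := ENNReal.mul_ne_top (ENNReal.ofReal_ne_top (r := b)) hy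
  have hF := ENNReal.add_ne_top.2 ⟨hX, hY⟩
  refine ⟨ne_top_of_le_ne_top hF h1, ?_⟩
  have h2 := ENNReal.toReal_mono hF h1
  rwa [ENNReal.toReal_add hX hY, ENNReal.toReal_mul, ENNReal.toReal_mul,
    ENNReal.toReal_ofReal ha, ENNReal.toReal_ofReal hb] at h2

theorem prox_three {γ : E → ℝ≥0∞} (hc : ConvexFnENN γ) {η : ℝ} (hη : 0 < η) {x p u : E}
    (h : IsProxPt γ η x p) (hp : γ p ≠ ⊤) (hu : γ u ≠ ⊤) :
    η * (γ p).toReal + ‖p - x‖ ^ 2 / 2 + ‖u - p‖ ^ 2 / 2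
      ≤ η * (γ u).toReal + ‖u - x‖ ^ 2 / 2 := by
  have key : ∀ l : ℝ, 0 < l → l < 1 →
      η * (γ p).toReal + ‖p - x‖ ^ 2 / 2 + (1 - l) * (‖u - p‖ ^ 2 / 2)
      ≤ η * (γ u).toReal + ‖u - x‖ ^ 2 / 2 := by
    intro l h0 h1
    obtain ⟨hf, hle⟩ := conv_real hc hp hu (sub_nonneg.2 h1.le) h0.le (by ring)
    have h2 := prox_real hη h hp hf
    have h3 : ‖(1 - l) • p + l • u - x‖ ^ 2 =
        (1 - l) * ‖p - x‖ ^ 2 + l * ‖u - x‖ ^ 2 - l * (1 - l) * ‖u - p‖ ^ 2 := by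
      have e1 : (1 - l) • p + l • u - x = (1 - l) • (p - x) + l • (u - x) := by module
      have e2 : u - p = (u - x) - (p - x) := by abel
      rw [e1, e2]
      generalize p - x = P
      generalize u - x = U
      rw [@norm_add_sq ℝ, @norm_sub_sq ℝ, norm_smul, norm_smul, real_inner_smul_left,
        real_inner_smul_right, mul_pow, mul_pow, Real.norm_eq_abs, Real.norm_eq_abs, sq_abs, sq_abs,
        real_inner_comm]
      simp only [RCLike.re_to_real]
      ring
    rw [h3] at h2
    have h4 := mul_le_mul_of_nonneg_left hle hη.le
    refine le_of_mul_le_mul_left ?_ h0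
    nlinarith
  by_contra hcon
  push Not at hcon
  set A := η * (γ p).toReal + ‖p - x‖ ^ 2 / 2
  set B := η * (γ u).toReal + ‖u - x‖ ^ 2 / 2
  set N := ‖u - p‖ ^ 2 / 2
  have hN : 0 ≤ N := by positivity
  have hd : 0 < A + N - B := by linarith
  set l := min (1/2) ((A + N - B) / (2 * (N + 1))) with hl
  have l1 : l ≤ 1 / 2 := min_le_left _ _
  have l2 : l ≤ (A + N - B) / (2 * (N + 1)) := min_le_right _ _
  have l0 : 0 < l := lt_min (by norm_num) (by positivity)
  have := key l l0 (by linarith)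
  rw [le_div_iff₀ (by positivity)] at l2
  nlinarith

theorem prox_grad_step [CompleteSpace E] (f : E → ℝ) (G : E → E) (L : ℝ)
    (hf : ∀ x, HasGradientAt f (G x) x) (hG : ∀ x y, ‖G x - G y‖ ≤ L * ‖x - y‖)
    {γ : E → ℝ≥0∞} (hc : ConvexFnENN γ) {η : ℝ} (hη : 0 < η) {x d y z : E}
    (h : IsProxPt γ η (x - η • d) y) (hy : γ y ≠ ⊤) (hz : γ z ≠ ⊤) :
    η * (f y + (γ y).toReal) ≤ η * (f z + (γ z).toReal) + η * inner ℝ (G x - d) (y - z)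
      + (η * L / 2 - 1 / 2) * ‖y - x‖ ^ 2 + (η * L / 2 + 1 / 2) * ‖z - x‖ ^ 2
      - 1 / 2 * ‖y - z‖ ^ 2 := by
  have h1 := prox_three hc hη h hy hz
  have h2 := mul_le_mul_of_nonneg_left (descent_upper f G L hf hG x y) hη.le
  have h3 := mul_le_mul_of_nonneg_left (descent_lower f G L hf hG x z) hη.le
  have e : ∀ w : E, ‖w - (x - η • d)‖ ^ 2 =
      ‖w - x‖ ^ 2 + 2 * η * inner ℝ d (w - x) + ‖η • d‖ ^ 2 := by
    intro w
    rw [show w - (x - η • d) = (w - x) + η • d by abel, @norm_add_sq ℝ, inner_smul_right,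
      real_inner_comm]
    simp
    ring
  rw [e, e] at h1
  have e2 : inner ℝ (G x - d) (y - z) = inner ℝ (G x) (y - x) - inner ℝ (G x) (z - x)
      - inner ℝ d (y - x) + inner ℝ d (z - x) := by
    rw [show y - z = (y - x) - (z - x) by abel, inner_sub_left,
      inner_sub_right (G x) (y - x), inner_sub_right d (y - x)]
    ring
  rw [e2, norm_sub_rev y z]
  nlinarith

theorem one_step [CompleteSpace E] (f : E → ℝ) (G : E → E) (L : ℝ)
    (hf : ∀ x, HasGradientAt f (G x) x) (hG : ∀ x y, ‖G x - G y‖ ≤ L * ‖x - y‖)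
    {γ : E → ℝ≥0∞} (hc : ConvexFnENN γ) (hp : ∃ x, γ x ≠ ⊤) {η : ℝ} (hη : 0 < η)
    (prox : E → E) (hprox : ∀ x, IsProxPt γ η x (prox x)) (x v : E) (hx : γ x ≠ ⊤) :
    f (prox (x - η • v)) + (γ (prox (x - η • v))).toReal
      ≤ f x + (γ x).toReal - η * (1 / 2 - η * L) * ‖gradMapping prox G η x‖ ^ 2
        - (1 / (2 * η) - L / 2) * ‖prox (x - η • v) - x‖ ^ 2 + η / 2 * ‖v - G x‖ ^ 2 := by
  set y := prox (x - η • v) with hy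
  set xb := prox (x - η • G x) with hxb
  have fy : γ y ≠ ⊤ := prox_finite hη hp (hprox _)
  have fb : γ xb ≠ ⊤ := prox_finite hη hp (hprox _)
  have h1 := prox_grad_step f G L hf hG hc hη (hprox (x - η • G x)) fb hx
  have h2 := prox_grad_step f G L hf hG hc hη (hprox (x - η • v)) fy fb
  rw [← hxb] at h1
  rw [← hy] at h2
  have h3 : η * inner ℝ (G x - v) (y - xb) ≤ η ^ 2 / 2 * ‖v - G x‖ ^ 2 + 1 / 2 * ‖y - xb‖ ^ 2 := by
    have a1 := real_inner_le_norm (G x - v) (y - xb)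
    rw [norm_sub_rev (G x) v] at a1
    have a2 := mul_le_mul_of_nonneg_left a1 hη.le
    nlinarith [sq_nonneg (η * ‖v - G x‖ - ‖y - xb‖)]
  have h4 : ‖xb - x‖ ^ 2 = η ^ 2 * ‖gradMapping prox G η x‖ ^ 2 := by
    unfold gradMapping
    rw [← hxb, norm_smul, mul_pow, norm_sub_rev, Real.norm_eq_abs, sq_abs]
    field_simp
  simp only [sub_self, inner_zero_left, norm_zero] at h1
  rw [h4] at h1 h2
  refine le_of_mul_le_mul_left ?_ hη
  have e : η * (f x + (γ x).toReal - η * (1 / 2 - η * L) * ‖gradMapping prox G η x‖ ^ 2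
        - (1 / (2 * η) - L / 2) * ‖y - x‖ ^ 2 + η / 2 * ‖v - G x‖ ^ 2) =
      η * (f x + (γ x).toReal) - η ^ 2 * (1 / 2 - η * L) * ‖gradMapping prox G η x‖ ^ 2
        - (1 / 2 - η * L / 2) * ‖y - x‖ ^ 2 + η ^ 2 / 2 * ‖v - G x‖ ^ 2 := by
    field_simp
  rw [e]
  nlinarith

theorem resample {ι A : Type*} [Fintype ι] [DecidableEq ι] [Fintype A] [Nonempty A] (i : ι)
    (H : (ι → A) → A → ℝ) (B : (ι → A) → ℝ)
    (hinv : ∀ ω a c, H (Function.update ω i a) c = H ω c)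
    (hB : ∀ ω, ∑ a, H ω a ≤ Fintype.card A * B ω) :
    ∑ ω, H ω (ω i) ≤ ∑ ω, B ω := by
  have hc : (0 : ℝ) < Fintype.card A := by exact_mod_cast Fintype.card_pos
  let e : (ι → A) × A ≃ (ι → A) × A :=
    { toFun := fun p => (Function.update p.1 i p.2, p.1 i)
      invFun := fun p => (Function.update p.1 i p.2, p.1 i)
      left_inv := fun p => by simp
      right_inv := fun p => by simp }
  have h1 : ∑ p : (ι → A) × A, H p.1 p.2 = ∑ p : (ι → A) × A, H p.1 (p.1 i) := by
    rw [← Equiv.sum_comp e]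
    simp [e, hinv]
  rw [Fintype.sum_prod_type, Fintype.sum_prod_type] at h1
  simp only [Finset.sum_const, Finset.card_univ, nsmul_eq_mul] at h1
  rw [← Finset.mul_sum] at h1
  refine le_of_mul_le_mul_left ?_ hc
  rw [← h1, Finset.mul_sum]
  exact Finset.sum_le_sum fun ω _ => hB ω

end helpers

section sampling

/-- number of size `b` subsets that contain both `i` and `j` -/
def cnt (n b : ℕ) (i j : Fin n) : ℝ :=
  ∑ A : {A : Finset (Fin n) // A.card = b}, if i ∈ A.1 ∧ j ∈ A.1 then 1 else 0

theorem cnt_perm (n b : ℕ) (i j : Fin n) (σ : Equiv.Perm (Fin n)) :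
    cnt n b (σ i) (σ j) = cnt n b i j := by
  unfold cnt
  let e : {A : Finset (Fin n) // A.card = b} ≃ {A : Finset (Fin n) // A.card = b} :=
    { toFun := fun A => ⟨A.1.map σ.toEmbedding, by rw [Finset.card_map]; exact A.2⟩
      invFun := fun A => ⟨A.1.map σ.symm.toEmbedding, by rw [Finset.card_map]; exact A.2⟩
      left_inv := fun A => by ext; simp
      right_inv := fun A => by ext; simp }
  rw [← Equiv.sum_comp e]
  simp [e]

theorem cnt_row (n b : ℕ) (i : Fin n) : ∑ j, cnt n b i j = b * cnt n b i i := by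
  unfold cnt
  rw [Finset.sum_comm, Finset.mul_sum]
  refine Finset.sum_congr rfl fun A _ => ?_
  by_cases h : i ∈ A.1
  · simp [h, A.2]
  · simp [h]

theorem cnt_diag_sum (n b : ℕ) :
    ∑ j, cnt n b j j = b * (Fintype.card {A : Finset (Fin n) // A.card = b} : ℝ) := by
  unfold cnt
  rw [Finset.sum_comm]
  have : ∀ A : {A : Finset (Fin n) // A.card = b},
      ∑ j : Fin n, (if j ∈ A.1 ∧ j ∈ A.1 then (1:ℝ) else 0) = b := by
    intro A
    simp [A.2]
  simp only [this, Finset.sum_const, Finset.card_univ, nsmul_eq_mul]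
  ring

theorem cnt_diag (n b : ℕ) (i : Fin n) :
    n * cnt n b i i = b * (Fintype.card {A : Finset (Fin n) // A.card = b} : ℝ) := by
  rw [← cnt_diag_sum]
  have : ∀ j, cnt n b j j = cnt n b i i := fun j => by
    have := cnt_perm n b i i (Equiv.swap i j)
    simpa using this
  simp [this]

theorem cnt_off (n b : ℕ) (i j : Fin n) (hij : j ≠ i) :
    (n - 1) * cnt n b i j = (b - 1) * cnt n b i i := by
  have h := cnt_row n b i
  rw [← Finset.add_sum_erase _ _ (Finset.mem_univ i)] at h
  have : ∀ k ∈ Finset.univ.erase i, cnt n b i k = cnt n b i j := fun k hk => by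
    have hk := Finset.ne_of_mem_erase hk
    have := cnt_perm n b i j (Equiv.swap j k)
    rwa [Equiv.swap_apply_left, Equiv.swap_apply_of_ne_of_ne hij.symm hk.symm] at this
  rw [Finset.sum_congr rfl this, Finset.sum_const, Finset.card_erase_of_mem (Finset.mem_univ i),
    Finset.card_univ, Fintype.card_fin, nsmul_eq_mul, Nat.cast_sub (by have := i.2; omega)] at h
  push_cast at h
  linarith

variable {E : Type*} [NormedAddCommGroup E] [InnerProductSpace ℝ E]

theorem sampling_centered {n b : ℕ} (hn : 2 ≤ n) (ξ : Fin n → E) (h0 : ∑ i, ξ i = 0) :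
    ∑ A : {A : Finset (Fin n) // A.card = b}, ‖∑ j ∈ A.1, ξ j‖ ^ 2 =
      (Fintype.card {A : Finset (Fin n) // A.card = b} : ℝ) * (b * (n - b) / (n * (n - 1)))
        * ∑ i, ‖ξ i‖ ^ 2 := by
  have hn1 : (2:ℝ) ≤ n := by exact_mod_cast hn
  set C := (Fintype.card {A : Finset (Fin n) // A.card = b} : ℝ)
  have h1 : ∀ A : {A : Finset (Fin n) // A.card = b}, ‖∑ j ∈ A.1, ξ j‖ ^ 2 =
      ∑ i, ∑ j, (if i ∈ A.1 ∧ j ∈ A.1 then (1:ℝ) else 0) * inner ℝ (ξ i) (ξ j) := by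
    intro A
    rw [← real_inner_self_eq_norm_sq, sum_inner]
    simp only [inner_sum, ite_and, ite_mul, one_mul, zero_mul]
    rw [← Finset.sum_subset (Finset.subset_univ A.1)]
    · refine Finset.sum_congr rfl fun i hi => ?_
      simp [hi]
    · intro i _ hi
      simp [hi]
  have hd : ∀ i, cnt n b i i = b * C / n := fun i => by
    rw [eq_div_iff (by positivity), mul_comm]; exact cnt_diag n b i
  set c2 : ℝ := (b - 1) * (b * C / n) / (n - 1) with hc2
  have ho : ∀ i j, j ≠ i → cnt n b i j = c2 := fun i j hij => by
    rw [hc2, eq_div_iff (by linarith), mul_comm, cnt_off n b i j hij, hd]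
  have h2 : ∀ i j, cnt n b i j * inner ℝ (ξ i) (ξ j) =
      c2 * inner ℝ (ξ i) (ξ j) + if j = i then (b * C / n - c2) * ‖ξ i‖ ^ 2 else 0 := by
    intro i j
    by_cases hij : j = i
    · subst hij
      rw [hd, if_pos rfl, real_inner_self_eq_norm_sq]; ring
    · rw [ho i j hij, if_neg hij, add_zero]
  calc _ = ∑ i, ∑ j, cnt n b i j * inner ℝ (ξ i) (ξ j) := by
        simp only [h1, cnt]
        rw [Finset.sum_comm]
        refine Finset.sum_congr rfl fun i _ => ?_
        rw [Finset.sum_comm]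
        refine Finset.sum_congr rfl fun j _ => ?_
        rw [Finset.sum_mul]
    _ = c2 * inner ℝ (∑ i, ξ i) (∑ j, ξ j) + (b * C / n - c2) * ∑ i, ‖ξ i‖ ^ 2 := by
        simp only [h2, Finset.sum_add_distrib, sum_inner, inner_sum, Finset.mul_sum,
          Finset.sum_ite_eq', Finset.mem_univ, if_true]
        rw [Finset.sum_comm]
    _ = _ := by
        rw [h0, inner_zero_left, hc2]
        have : (n:ℝ) - 1 ≠ 0 := by linarith
        field_simp
        ring

theorem sampling {n b : ℕ} (hn : 2 ≤ n) (hb : 1 ≤ b) (hbn : b ≤ n) (ζ : Fin n → E) (K : ℝ)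
    (hζ : ∀ i, ‖ζ i‖ ^ 2 ≤ K) :
    ∑ A : {A : Finset (Fin n) // A.card = b},
      ‖(1 / b : ℝ) • ∑ j ∈ A.1, ζ j - (1 / n : ℝ) • ∑ i, ζ i‖ ^ 2 ≤
      (Fintype.card {A : Finset (Fin n) // A.card = b} : ℝ) *
        (((n - b) / (b * (n - 1)) : ℝ) * K) := by
  have hn1 : (2:ℝ) ≤ n := by exact_mod_cast hn
  have hb1 : (1:ℝ) ≤ b := by exact_mod_cast hb
  have hbn1 : (b:ℝ) ≤ n := by exact_mod_cast hbn
  set μ := (1 / n : ℝ) • ∑ i, ζ i with hμ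
  have hnμ : (n:ℝ) • μ = ∑ i, ζ i := by
    rw [hμ, smul_smul, mul_one_div_cancel (by positivity), one_smul]
  have h0 : ∑ i, (ζ i - μ) = 0 := by
    rw [Finset.sum_sub_distrib, Finset.sum_const, Finset.card_univ, Fintype.card_fin,
      ← Nat.cast_smul_eq_nsmul ℝ, hnμ, sub_self]
  have h1 := sampling_centered (b := b) hn (fun i => ζ i - μ) h0
  have h2 : ∀ A : {A : Finset (Fin n) // A.card = b},
      ‖(1 / b : ℝ) • ∑ j ∈ A.1, ζ j - μ‖ ^ 2 = (1 / b) ^ 2 * ‖∑ j ∈ A.1, (ζ j - μ)‖ ^ 2 := by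
    intro A
    have : (1 / b : ℝ) • ∑ j ∈ A.1, ζ j - μ = (1 / b : ℝ) • ∑ j ∈ A.1, (ζ j - μ) := by
      rw [Finset.sum_sub_distrib, Finset.sum_const, A.2, ← Nat.cast_smul_eq_nsmul ℝ, smul_sub,
        smul_smul (1 / b : ℝ), one_div_mul_cancel (by positivity), one_smul]
    rw [this, norm_smul, mul_pow, Real.norm_eq_abs, sq_abs]
  have h3 : ∑ i, ‖ζ i - μ‖ ^ 2 ≤ n * K := by
    have a1 : ∀ i, ‖ζ i - μ‖ ^ 2 = ‖ζ i‖ ^ 2 - 2 * inner ℝ (ζ i) μ + ‖μ‖ ^ 2 := fun i =>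
      @norm_sub_sq ℝ _ _ _ _ _ _
    have a2 : ∑ i, inner ℝ (ζ i) μ = n * ‖μ‖ ^ 2 := by
      rw [← sum_inner, ← hnμ, real_inner_smul_left, real_inner_self_eq_norm_sq]
    simp only [a1, Finset.sum_add_distrib, Finset.sum_sub_distrib, ← Finset.mul_sum, a2]
    have a3 : ∑ i, ‖ζ i‖ ^ 2 ≤ n * K := by
      have := Finset.sum_le_sum (fun i (_ : i ∈ Finset.univ) => hζ i)
      simpa using this
    simp only [Finset.sum_const, Finset.card_univ, Fintype.card_fin, nsmul_eq_mul]
    have : 0 ≤ (n:ℝ) * ‖μ‖ ^ 2 := by positivity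
    linarith
  simp only [h2, ← Finset.mul_sum]
  rw [h1]
  set C := (Fintype.card {A : Finset (Fin n) // A.card = b} : ℝ)
  have hC : 0 ≤ C := by positivity
  have hn2 : 0 < (n:ℝ) - 1 := by linarith
  have hnb : 0 ≤ (n:ℝ) - b := by linarith
  calc _ ≤ (1 / b : ℝ) ^ 2 * (C * (b * (n - b) / (n * (n - 1))) * (n * K)) := by gcongr
    _ = _ := by field_simp

end sampling

section assembly

theorem epoch (m : ℕ) (p q dd r : ℕ → ℝ) (c a e : ℝ) (he : 0 ≤ e) (hea : e * m ^ 2 ≤ a)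
    (hd : ∀ t, 0 ≤ dd t)
    (hp : ∀ t < m, p (t + 1) ≤ p t - c * q t - a * dd t + e * r t)
    (hr : ∀ t < m, r t ≤ t * ∑ i ∈ Finset.range t, dd i) :
    p m ≤ p 0 - c * ∑ t ∈ Finset.range m, q t := by
  set D := ∑ i ∈ Finset.range m, dd i with hD
  have hD0 : 0 ≤ D := Finset.sum_nonneg fun i _ => hd i
  have h1 : ∀ t < m, r t ≤ m * D := fun t ht => by
    refine (hr t ht).trans ?_
    have : ∑ i ∈ Finset.range t, dd i ≤ D :=
      Finset.sum_le_sum_of_subset_of_nonneg (by simpa using ht.le) fun i _ _ => hd i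
    have h2 : (t:ℝ) ≤ m := by exact_mod_cast ht.le
    have h3 : 0 ≤ ∑ i ∈ Finset.range t, dd i := Finset.sum_nonneg fun i _ => hd i
    gcongr
  have h2 : ∀ t ∈ Finset.range m, p (t + 1) - p t ≤ - c * q t - a * dd t + e * (m * D) := by
    intro t ht
    have ht := Finset.mem_range.1 ht
    have := hp t ht
    have := mul_le_mul_of_nonneg_left (h1 t ht) he
    linarith
  have h3 := Finset.sum_le_sum h2
  rw [Finset.sum_range_sub, Finset.sum_add_distrib, Finset.sum_sub_distrib, ← Finset.mul_sum,
    ← Finset.mul_sum, Finset.sum_const, Finset.card_range, nsmul_eq_mul, ← hD] at h3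
  have h4 := mul_le_mul_of_nonneg_right hea hD0
  linarith

theorem dist_sq_le {E : Type*} [NormedAddCommGroup E] (x : ℕ → E) (t : ℕ) :
    ‖x t - x 0‖ ^ 2 ≤ t * ∑ i ∈ Finset.range t, ‖x (i + 1) - x i‖ ^ 2 := by
  rw [← Finset.sum_range_sub]
  calc _ ≤ (∑ i ∈ Finset.range t, ‖x (i + 1) - x i‖) ^ 2 := by
        gcongr
        exact norm_sum_le _ _
    _ ≤ _ := by
        have := sq_sum_le_card_mul_sum_sq (s := Finset.range t) (f := fun i => ‖x (i + 1) - x i‖)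
        simpa using this

theorem avg_grad {n : ℕ} {E : Type*} [NormedAddCommGroup E] [InnerProductSpace ℝ E]
    [CompleteSpace E] (g : Fin n → E → ℝ) (hg : ∀ i, Differentiable ℝ (g i)) (x : E) :
    HasGradientAt (avgFn g) ((1 / n : ℝ) • ∑ i, gradient (g i) x) x := by
  rw [hasGradientAt_iff_hasFDerivAt, map_smul, map_sum]
  have h : ∀ i ∈ Finset.univ, HasFDerivAt (g i) (InnerProductSpace.toDual ℝ E (gradient (g i) x)) x :=
    fun i _ => ((hg i) x).hasGradientAt.hasFDerivAt
  have := (HasFDerivAt.fun_sum h).const_smul (1 / n : ℝ)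
  exact this

end assembly

/-- Iteration complexity for ε-stationarity, Corollary 1. Under the
hypotheses of the main convergence theorem, if the total number of inner iterations
satisfies `mS ≥ (f′(W^{0,0}) − f*)/(η(1/2 − ηL)ε)`, then the uniformly-randomly chosen
output is an ε-stationary point in expectation: `E‖Γ_{f′,η}(W_final)‖² ≤ ε`. -/
theorem smf_vr_epsilon_stationary {d k n : ℕ} (hn : 2 ≤ n)
    (m S b : ℕ) (hm : 1 ≤ m) (hS : 1 ≤ S) (hb : 1 ≤ b) (hbn : b ≤ n)
    (θ L η : ℝ) (hθ : 2 < θ) (hL : 0 < L) (hη : η = 1 / (θ * L))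
    (hcond : 2 * m * (m + 1) * ((n - b) / (b * (n - 1)) : ℝ) ≤ θ * (θ - 1))
    (g : Fin n → Mat d k → ℝ)
    (hgdiff : ∀ i, Differentiable ℝ (g i))
    (hglip : ∀ i, ∀ x y : Mat d k, ‖gradient (g i) x - gradient (g i) y‖ ≤ L * ‖x - y‖)
    (ψ' : Mat d k → ℝ≥0∞) (hψconv : ConvexFnENN ψ') (hψproper : ∃ x, ψ' x ≠ ⊤)
    (hψclosed : LowerSemicontinuous ψ')
    -- `f* = min f′` is attained and finite
    (fstar : ℝ)
    (hfstar : ∃ xm : Mat d k,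
        ((avgFn g xm : ℝ) : EReal) + (ψ' xm : EReal) = ((fstar : ℝ) : EReal) ∧
        ∀ x : Mat d k, ((fstar : ℝ) : EReal) ≤ ((avgFn g x : ℝ) : EReal) + (ψ' x : EReal))
    -- the proximal map of `ηψ′`
    (prox : Mat d k → Mat d k) (hprox : ∀ x, IsProxPt ψ' η x (prox x))
    -- the deterministic initial dictionary, in the domain of `ψ′`
    (W00 : Mat d k) (hW00 : ψ' W00 ≠ ⊤)
    -- the random iterates
    (W : ℕ → ℕ → BatchSpace n S m b → Mat d k)
    (hinit : ∀ ω, W 0 0 ω = W00)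
    (houter : ∀ (s : ℕ) (ω : BatchSpace n S m b), W (s + 1) 0 ω = W s m ω)
    (hinner : ∀ (s : Fin S) (t : Fin m) (ω : BatchSpace n S m b),
      W s ((t : ℕ) + 1) ω = prox (W s t ω - η •
        ((1 / b : ℝ) • ∑ j ∈ (ω (s, t)).1,
            (gradient (g j) (W s t ω) - gradient (g j) (W s 0 ω))
          + gradient (avgFn g) (W s 0 ω))))
    (ε : ℝ) (hε : 0 < ε)
    (hiter : (avgFn g W00 + (ψ' W00).toReal - fstar) / (η * (1 / 2 - η * L) * ε)
        ≤ (m * S : ℝ)) :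
    (1 / (m * S) : ℝ) * ∑ s : Fin S, ∑ t : Fin m,
        ((∑ ω : BatchSpace n S m b,
            ‖gradMapping prox (gradient (avgFn g)) η (W s t ω)‖ ^ 2)
          / (Fintype.card (BatchSpace n S m b) : ℝ))
      ≤ ε := by
  classical
  have hθ0 : 0 < θ := by linarith
  have hη0 : 0 < η := by rw [hη]; positivity
  have hηL : η * L = 1 / θ := by rw [hη]; field_simp
  have hn1 : (2:ℝ) ≤ n := by exact_mod_cast hn
  have hb1 : (1:ℝ) ≤ b := by exact_mod_cast hb
  have hbn1 : (b:ℝ) ≤ n := by exact_mod_cast hbn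
  have hm1 : (1:ℝ) ≤ m := by exact_mod_cast hm
  have hS1 : (1:ℝ) ≤ S := by exact_mod_cast hS
  have hGeq : ∀ x, gradient (avgFn g) x = (1 / n : ℝ) • ∑ i, gradient (g i) x :=
    fun x => (avg_grad g hgdiff x).gradient
  set G := gradient (avgFn g) with hGdef
  have hGr : ∀ x, HasGradientAt (avgFn g) (G x) x := fun x => by
    rw [hGeq]; exact avg_grad g hgdiff x
  have hGlip : ∀ x y, ‖G x - G y‖ ≤ L * ‖x - y‖ := fun x y => by
    rw [hGeq, hGeq, ← smul_sub, ← Finset.sum_sub_distrib, norm_smul]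
    have h1 : ‖∑ i, (gradient (g i) x - gradient (g i) y)‖ ≤ n * (L * ‖x - y‖) := by
      refine (norm_sum_le _ _).trans ?_
      refine (Finset.sum_le_sum fun i _ => hglip i x y).trans ?_
      simp
    rw [Real.norm_of_nonneg (by positivity)]
    calc _ ≤ (1 / n : ℝ) * (n * (L * ‖x - y‖)) := by gcongr
      _ = _ := by field_simp
  set α : ℝ := (n - b) / (b * (n - 1)) with hα
  have hα0 : 0 ≤ α := div_nonneg (by linarith) (mul_nonneg (by linarith) (by linarith))
  have : Nonempty {A : Finset (Fin n) // A.card = b} := by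
    obtain ⟨A, _, hA⟩ := Finset.exists_subset_card_eq (s := (Finset.univ : Finset (Fin n))) (n := b)
      (by simpa using hbn)
    exact ⟨⟨A, hA⟩⟩
  -- adaptedness
  have hadapt : ∀ (s : ℕ) (ω ω' : BatchSpace n S m b), s < S → ∀ t ≤ m,
      (∀ i : Fin S × Fin m, (i.1 : ℕ) < s ∨ ((i.1 : ℕ) = s ∧ (i.2 : ℕ) < t) → ω i = ω' i) →
      W s t ω = W s t ω' := by
    intro s ω ω'
    have step : ∀ s, s < S → W s 0 ω = W s 0 ω' → ∀ t ≤ m,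
        (∀ i : Fin S × Fin m, (i.1 : ℕ) = s ∧ (i.2 : ℕ) < t → ω i = ω' i) →
        W s t ω = W s t ω' := by
      intro s hs h0 t
      induction t with
      | zero => intro _ _; exact h0
      | succ t ih =>
        intro ht hag
        have h1 := ih (by omega) fun i hi => hag i ⟨hi.1, by omega⟩
        have e1 := hinner ⟨s, hs⟩ ⟨t, by omega⟩ ω
        have e2 := hinner ⟨s, hs⟩ ⟨t, by omega⟩ ω'
        simp only at e1 e2
        rw [e1, e2, h1, h0, hag (⟨s, hs⟩, ⟨t, by omega⟩) ⟨rfl, by simp⟩]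
    induction s with
    | zero =>
      intro hs t ht hag
      exact step 0 hs (by rw [hinit, hinit]) t ht fun i hi => hag i (Or.inr hi)
    | succ s ih =>
      intro hs t ht hag
      refine step (s + 1) hs ?_ t ht fun i hi => hag i (Or.inr hi)
      rw [houter, houter]
      refine ih (by omega) m le_rfl fun i hi => hag i (Or.inl ?_)
      omega
  -- finiteness
  have hfin0 : ∀ s ≤ S, ∀ ω, ψ' (W s 0 ω) ≠ ⊤ := by
    intro s hs ω
    cases s with
    | zero => rw [hinit]; exact hW00
    | succ s =>
      rw [houter]
      have := hinner ⟨s, by omega⟩ ⟨m - 1, by omega⟩ ω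
      simp only at this
      rw [Nat.sub_add_cancel hm] at this
      rw [this]
      exact prox_finite hη0 hψproper (hprox _)
  have hfin : ∀ s < S, ∀ t ≤ m, ∀ ω, ψ' (W s t ω) ≠ ⊤ := by
    intro s hs t ht ω
    cases t with
    | zero => exact hfin0 s hs.le ω
    | succ t =>
      have := hinner ⟨s, hs⟩ ⟨t, by omega⟩ ω
      simp only at this
      rw [this]
      exact prox_finite hη0 hψproper (hprox _)
  let F : Mat d k → ℝ := fun x => avgFn g x + (ψ' x).toReal
  let Ph : ℕ → ℕ → ℝ := fun s t => ∑ ω, F (W s t ω)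
  let Q : ℕ → ℕ → ℝ := fun s t => ∑ ω, ‖gradMapping prox G η (W s t ω)‖ ^ 2
  let D : ℕ → ℕ → ℝ := fun s t => ∑ ω, ‖W s (t + 1) ω - W s t ω‖ ^ 2
  let R : ℕ → ℕ → ℝ := fun s t => ∑ ω, ‖W s t ω - W s 0 ω‖ ^ 2
  have hvar : ∀ (s : Fin S) (t : Fin m),
      ∑ ω : BatchSpace n S m b, ‖((1 / b : ℝ) • ∑ j ∈ (ω (s, t)).1,
            (gradient (g j) (W s t ω) - gradient (g j) (W s 0 ω)) + G (W s 0 ω)) - G (W s t ω)‖ ^ 2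
        ≤ α * L ^ 2 * R s t := by
    intro s t
    have h := resample (s, t)
      (fun (ω : BatchSpace n S m b) A => ‖((1 / b : ℝ) • ∑ j ∈ A.1,
            (gradient (g j) (W s t ω) - gradient (g j) (W s 0 ω)) + G (W s 0 ω)) - G (W s t ω)‖ ^ 2)
      (fun ω => α * (L ^ 2 * ‖W s t ω - W s 0 ω‖ ^ 2)) ?_ ?_
    · refine h.trans (le_of_eq ?_)
      simp only [R, Finset.mul_sum]
      exact Finset.sum_congr rfl fun ω _ => by ring
    · intro ω a c
      have e : ∀ t' : ℕ, t' ≤ t → W s t' (Function.update ω (s, t) a) = W s t' ω := by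
        intro t' ht'
        refine hadapt s _ _ s.2 t' (by omega) fun i hi => ?_
        rw [Function.update_of_ne]
        rintro rfl
        simp only at hi
        omega
      simp only [e t le_rfl, e 0 (Nat.zero_le _)]
    · intro ω
      have := sampling hn hb hbn
        (fun j => gradient (g j) (W s t ω) - gradient (g j) (W s 0 ω))
        (L ^ 2 * ‖W s t ω - W s 0 ω‖ ^ 2) (fun j => by
          rw [← mul_pow]
          exact pow_le_pow_left₀ (norm_nonneg _) (hglip j _ _) 2)
      refine (le_of_eq ?_).trans this
      refine Finset.sum_congr rfl fun A _ => ?_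
      congr 2
      rw [hGeq, hGeq, Finset.sum_sub_distrib (s := Finset.univ), smul_sub (1 / n : ℝ)]
      abel
  have hstep : ∀ s < S, ∀ t < m, Ph s (t + 1) ≤ Ph s t - η * (1 / 2 - η * L) * Q s t
      - (1 / (2 * η) - L / 2) * D s t + (η / 2 * (α * L ^ 2)) * R s t := by
    intro s hs t ht
    have h1 : ∀ ω ∈ (Finset.univ : Finset (BatchSpace n S m b)), _ := fun ω _ =>
      one_step (avgFn g) G L hGr hGlip hψconv hψproper hη0 prox hprox (W s t ω)
      ((1 / b : ℝ) • ∑ j ∈ (ω (⟨s, hs⟩, ⟨t, ht⟩)).1,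
            (gradient (g j) (W s t ω) - gradient (g j) (W s 0 ω)) + G (W s 0 ω))
      (hfin s hs t ht.le ω)
    have h2 := Finset.sum_le_sum h1
    have h3 : ∀ ω, prox (W s t ω - η • ((1 / b : ℝ) • ∑ j ∈ (ω (⟨s, hs⟩, ⟨t, ht⟩)).1,
            (gradient (g j) (W s t ω) - gradient (g j) (W s 0 ω)) + G (W s 0 ω)))
          = W s (t + 1) ω := fun ω => (hinner ⟨s, hs⟩ ⟨t, ht⟩ ω).symm
    simp only [h3] at h2
    rw [Finset.sum_add_distrib, Finset.sum_add_distrib, Finset.sum_sub_distrib,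
      Finset.sum_sub_distrib, Finset.sum_add_distrib,
      ← Finset.mul_sum, ← Finset.mul_sum, ← Finset.mul_sum] at h2
    have h4 := mul_le_mul_of_nonneg_left (hvar ⟨s, hs⟩ ⟨t, ht⟩) (by positivity : 0 ≤ η / 2)
    simp only at h4
    simp only [Ph, Q, D, F]
    rw [Finset.sum_add_distrib, Finset.sum_add_distrib]
    linarith
  have hepoch : ∀ s < S, Ph (s + 1) 0 ≤ Ph s 0
      - η * (1 / 2 - η * L) * ∑ t ∈ Finset.range m, Q s t := by
    intro s hs
    have e : Ph (s + 1) 0 = Ph s m := by simp only [Ph, houter]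
    rw [e]
    refine epoch m (Ph s) (Q s) (D s) (R s) _ _ _ (by positivity) ?_
      (fun t => Finset.sum_nonneg fun ω _ => by positivity) (hstep s hs) ?_
    · have e1 : 1 / (2 * η) - L / 2 = L / (2 * θ) * (θ * (θ - 1)) := by
        rw [hη]; field_simp
      have e2 : η / 2 * (α * L ^ 2) * (m:ℝ) ^ 2 = L / (2 * θ) * (α * m ^ 2) := by
        rw [hη]; field_simp
      rw [e1, e2]
      refine mul_le_mul_of_nonneg_left ?_ (by positivity)
      nlinarith [mul_nonneg hα0 (sq_nonneg (m:ℝ)), mul_nonneg hα0 (by linarith : 0 ≤ (m:ℝ))]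
    · intro t _
      simp only [R, D]
      rw [Finset.sum_comm, Finset.mul_sum]
      exact Finset.sum_le_sum fun ω _ => dist_sq_le (fun t => W s t ω) t
  have htel : ∀ s ≤ S, Ph s 0 ≤ Ph 0 0
      - η * (1 / 2 - η * L) * ∑ s' ∈ Finset.range s, ∑ t ∈ Finset.range m, Q s' t := by
    intro s
    induction s with
    | zero => intro _; simp
    | succ s ih =>
      intro hs
      have h1 := ih (by omega)
      have h2 := hepoch s (by omega)
      rw [Finset.sum_range_succ, mul_add]
      linarith
  have hlow : ∀ ω, fstar ≤ F (W S 0 ω) := by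
    intro ω
    obtain ⟨_, _, hmin⟩ := hfstar
    have h1 := hmin (W S 0 ω)
    have h2 := hfin0 S le_rfl ω
    have h3 : ((ψ' (W S 0 ω) : ℝ≥0∞) : EReal) = (((ψ' (W S 0 ω)).toReal : ℝ) : EReal) :=
      (EReal.coe_ennreal_toReal h2).symm
    rw [h3, ← EReal.coe_add, EReal.coe_le_coe_iff] at h1
    exact h1
  set N : ℝ := (Fintype.card (BatchSpace n S m b) : ℝ) with hN
  have hN0 : 0 < N := by
    rw [hN]; exact_mod_cast Fintype.card_pos
  have hP0 : Ph 0 0 = N * F W00 := by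
    simp only [Ph, hinit, Finset.sum_const, Finset.card_univ, nsmul_eq_mul, hN]
  have hPS : N * fstar ≤ Ph S 0 := by
    have := Finset.sum_le_sum fun ω (_ : ω ∈ (Finset.univ : Finset (BatchSpace n S m b))) => hlow ω
    simpa only [Finset.sum_const, Finset.card_univ, nsmul_eq_mul] using this
  have hmain := htel S le_rfl
  set T := ∑ s' ∈ Finset.range S, ∑ t ∈ Finset.range m, Q s' t with hT
  have hTeq : ∑ s : Fin S, ∑ t : Fin m, Q s t / N = T / N := by
    rw [hT, Finset.sum_div, Finset.sum_range]
    refine Finset.sum_congr rfl fun s _ => ?_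
    rw [Finset.sum_div, Finset.sum_range]
  have hgoal : (1 / (m * S) : ℝ) * ∑ s : Fin S, ∑ t : Fin m, Q s t / N ≤ ε := by
    rw [hTeq]
    have hc : 0 < η * (1 / 2 - η * L) := by
      refine mul_pos hη0 ?_
      rw [hηL, sub_pos]
      exact one_div_lt_one_div_of_lt (by norm_num) hθ
    have hmS : (0:ℝ) < m * S := by positivity
    rw [div_le_iff₀ (by positivity)] at hiter
    have h1 : η * (1 / 2 - η * L) * T ≤ N * (F W00 - fstar) := by
      rw [hP0] at hmain; linarith
    have h2 : F W00 - fstar ≤ m * S * (η * (1 / 2 - η * L) * ε) := hiter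
    have h3 := mul_le_mul_of_nonneg_left h2 hN0.le
    have h4 : T ≤ N * (m * S) * ε := by
      refine le_of_mul_le_mul_left ?_ hc
      linarith
    rw [one_div_mul_eq_div, div_le_iff₀ hmS, div_le_iff₀ hN0]
    linarith
  exact hgoal
end
end
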